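/- arXiv:0805.2416 — 3 statements merged into one kernel-verified Lean document; each statement's English description precedes it below -/
import Mathlib

section
/- For all n ≥ 0 and 0 ≤ k ≤ n, Σ_{σ ∈ S_n, fix(σ)=k} q^{maj(σ)} t^{exc(σ)} = [n choose k]_q · Σ_{σ ∈ D_{n−k}} q^{maj(σ)} t^{exc(σ)}, where D_m is the set of derangements in S_m and [n choose k]_q is the q-binomial coefficient. -/
/-!
The theorem follows from a statement for each single derangement `α ∈ S_m`: the permutations
`σ ∈ S_{m + k}` with `k` fixed points whose standardized non-fixed part is `α` correspond to the
`k`-element sets `S` of fixed positions, all of them have `exc σ = exc α`, and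
`∑_S q ^ maj σ = q ^ maj α * [m + k choose k]_q`.

The descents of such a `σ` are those of a shuffle of the word `α` with `k` equal letters, once every
excedance letter is declared larger, and every anti-excedance letter smaller, than a fixed point
(`desAt_iff_shDes`). Indeed, `σ i > i` forces `σ i ≥ i + 1`, and `σ (i + 1) < i + 1` forces
`σ (i + 1) ≤ i`, so comparisons between neighbours of different kinds are forced, while neighbours
of the same kind that are both letters compare as in `α`.

The shuffle identity `sum_shMaj` is proved by induction on the length. The generating function is
split into `shA` and `shB` according to whether the last entry is a fixed point or a letter. Both
have closed forms (`shB_eq_and_shA_eq`), monomials times Gaussian binomials, and each induction step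
is one of the two `q`-Pascal rules.
-/


open scoped Classical

/-- Descent set of `σ ∈ S_n` (0-based positions). -/
noncomputable def DesSet (n : ℕ) (σ : Equiv.Perm (Fin n)) : Finset ℕ :=
  (Finset.range n).filter fun i =>
    ∃ (h1 : i < n) (h2 : i + 1 < n), σ ⟨i + 1, h2⟩ < σ ⟨i, h1⟩

/-- Major index. -/
noncomputable def maj (n : ℕ) (σ : Equiv.Perm (Fin n)) : ℕ :=
  ∑ i ∈ DesSet n σ, (i + 1)

/-- Excedance number. -/
noncomputable def exc (n : ℕ) (σ : Equiv.Perm (Fin n)) : ℕ :=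
  ((Finset.range n).filter fun i => ∃ h : i < n, i < (σ ⟨i, h⟩ : ℕ)).card

/-- Number of fixed points. -/
noncomputable def fixpts (n : ℕ) (σ : Equiv.Perm (Fin n)) : ℕ :=
  ((Finset.univ : Finset (Fin n)).filter fun i => σ i = i).card

/-- Gaussian (q-)binomial coefficient, via the q-Pascal recurrence. -/
def qbinom {R : Type*} [CommSemiring R] (q : R) : ℕ → ℕ → R
  | _, 0 => 1
  | 0, _ + 1 => 0
  | n + 1, k + 1 => qbinom q n k + q ^ (k + 1) * qbinom q n (k + 1)

/-- Two-variable polynomial ring `ℤ[q,t]`: `q = X true`, `t = X false`. -/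
abbrev Rqt : Type := MvPolynomial Bool ℤ

noncomputable def qv : Rqt := MvPolynomial.X true
noncomputable def tv : Rqt := MvPolynomial.X false

/-! ### Gaussian binomials -/

theorem qbinom_of_lt {R : Type*} [CommSemiring R] (q : R) (n : ℕ) :
    ∀ k, n < k → qbinom q n k = 0 := by
  induction n with
  | zero => intro k hk; obtain ⟨k, rfl⟩ := Nat.exists_eq_add_of_lt hk; simp [qbinom]
  | succ n ih =>
    intro k hk
    obtain ⟨k, rfl⟩ : ∃ j, k = j + 1 := ⟨k - 1, by omega⟩
    rw [qbinom, ih k (by omega), ih (k + 1) (by omega)]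
    simp

/-- `qP q m k` is the Gaussian binomial `[m + k choose k]_q`, indexed by the sizes of the two
complementary parts. -/
def qP {R : Type*} [CommSemiring R] (q : R) (m k : ℕ) : R := qbinom q (m + k) k

section Pascal

variable {R : Type*} [CommRing R] (q : R)

theorem qP_zero_right (m : ℕ) : qP q m 0 = 1 := by
  unfold qP; cases m <;> simp [qbinom]

theorem qP_zero_left (k : ℕ) : qP q 0 k = 1 := by
  unfold qP
  induction k with
  | zero => simp [qbinom]
  | succ k ih =>
    rw [← Nat.add_assoc, qbinom, ih, qbinom_of_lt q _ _ (by omega)]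
    simp

theorem qP_succ_succ (m k : ℕ) :
    qP q (m + 1) (k + 1) = qP q (m + 1) k + q ^ (k + 1) * qP q m (k + 1) := by
  unfold qP
  rw [← Nat.add_assoc, qbinom]
  congr 3; ring

/-- The other `q`-Pascal rule, dual to the one defining `qbinom`. -/
theorem qP_succ_succ' (m k : ℕ) :
    qP q (m + 1) (k + 1) = q ^ (m + 1) * qP q (m + 1) k + qP q m (k + 1) := by
  induction m generalizing k with
  | zero =>
    induction k with
    | zero => rw [qP_succ_succ]; simp [qP_zero_left, qP_zero_right]; ring
    | succ k ih =>
      have e1 := qP_succ_succ q 0 (k + 1)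
      have e2 := qP_succ_succ q 0 k
      simp only [qP_zero_left] at *
      linear_combination e1 + ih - q * e2
  | succ m ihm =>
    induction k with
    | zero =>
      have e1 := qP_succ_succ q (m + 1) 0
      have e2 := qP_succ_succ q m 0
      have e3 := ihm 0
      simp only [qP_zero_right] at *
      linear_combination e1 - e2 + q * e3
    | succ k ih =>
      have e1 := qP_succ_succ q (m + 1) (k + 1)
      have e2 := qP_succ_succ q (m + 1) k
      have e3 := qP_succ_succ q m (k + 1)
      have e4 := ihm (k + 1)
      linear_combination e1 + ih - q ^ (m + 2) * e2 - e3 + q ^ (k + 2) * e4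

end Pascal

/-! ### Major index of shuffles -/

/-- Descent predicate of a shuffle. A word of letters is shuffled with fixed points placed at the
positions in `S`; `t j` says that the `j`-th letter is an excedance (otherwise it is an
anti-excedance) and `d j` that the `j`-th letter exceeds the next one. The letter at a position
`i ∉ S` has index `#(range i \ S)`. Anti-excedances count as smaller, and excedances as larger,
than every fixed point. -/
def ShDes (t d : ℕ → Prop) (S : Finset ℕ) (i : ℕ) : Prop :=
  if i ∈ S then (if i + 1 ∈ S then False else ¬ t (Finset.range i \ S).card)
  else (if i + 1 ∈ S then t (Finset.range i \ S).card else d (Finset.range i \ S).card)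

/-- Major index of the length-`n` shuffle described by `ShDes`. -/
noncomputable def shMaj (t d : ℕ → Prop) (S : Finset ℕ) (n : ℕ) : ℕ :=
  ∑ i ∈ Finset.range (n - 1), if ShDes t d S i then i + 1 else 0

/-- Major index of a word with `m` letters and descent predicate `d`. -/
noncomputable def wMaj (d : ℕ → Prop) (m : ℕ) : ℕ :=
  ∑ i ∈ Finset.range (m - 1), if d i then i + 1 else 0

theorem wMaj_succ (d : ℕ → Prop) (m : ℕ) :
    wMaj d (m + 2) = wMaj d (m + 1) + if d m then m + 1 else 0 := by
  simp [wMaj, Finset.sum_range_succ]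

theorem shMaj_succ (t d : ℕ → Prop) (S : Finset ℕ) (n : ℕ) :
    shMaj t d S (n + 2) = shMaj t d S (n + 1) + if ShDes t d S n then n + 1 else 0 := by
  simp [shMaj, Finset.sum_range_succ]

theorem shMaj_insert (t d : ℕ → Prop) (S : Finset ℕ) (n : ℕ) :
    shMaj t d (insert n S) n = shMaj t d S n := by
  unfold shMaj
  refine Finset.sum_congr rfl fun i hi => ?_
  have hi : i < n - 1 := Finset.mem_range.1 hi
  have h : Finset.range i \ insert n S = Finset.range i \ S := by
    ext x; simp only [Finset.mem_sdiff, Finset.mem_range, Finset.mem_insert]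
    constructor
    · tauto
    · rintro ⟨h1, h2⟩
      exact ⟨h1, by rintro (h | h); · omega
                    · exact h2 h⟩
  have h1 : i ≠ n := by omega
  have h2 : i + 1 ≠ n := by omega
  have h3 : ShDes t d (insert n S) i ↔ ShDes t d S i := by
    simp [ShDes, h, Finset.mem_insert, h1, h2]
  simp only [h3]

section Shuffle

variable {R : Type*} [CommRing R] (q : R) (t d : ℕ → Prop)

/-- Generating function of shuffles of `m` letters with `k + 1` fixed points, the last entry being
a fixed point. -/
noncomputable def shA (m k : ℕ) : R :=
  ∑ S ∈ Finset.powersetCard k (Finset.range (m + k)),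
    q ^ shMaj t d (insert (m + k) S) (m + k + 1)

/-- Generating function of shuffles of `m + 1` letters with `k` fixed points, the last entry being
a letter. -/
noncomputable def shB (m k : ℕ) : R :=
  ∑ S ∈ Finset.powersetCard k (Finset.range (m + k)), q ^ shMaj t d S (m + k + 1)

theorem sum_powersetCard_range_succ (n k : ℕ) (f : Finset ℕ → R) :
    ∑ S ∈ Finset.powersetCard (k + 1) (Finset.range (n + 1)), f S =
      ∑ S ∈ Finset.powersetCard k (Finset.range n), f (insert n S) +
        ∑ S ∈ Finset.powersetCard (k + 1) (Finset.range n), f S := by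
  rw [Finset.range_add_one, Finset.powersetCard_succ_insert (by simp), Finset.sum_union, add_comm,
    Finset.sum_image]
  · intro S hS T hT h
    have hS := (Finset.mem_powersetCard.1 hS).1
    have hT := (Finset.mem_powersetCard.1 hT).1
    rw [← Finset.erase_insert (a := n) (s := S), ← Finset.erase_insert (a := n) (s := T), h]
    · intro h; simpa using hT h
    · intro h; simpa using hS h
  · rw [Finset.disjoint_left]
    intro S hS hS'
    obtain ⟨T, -, rfl⟩ := Finset.mem_image.1 hS'
    simpa using (Finset.mem_powersetCard.1 hS).1 (Finset.mem_insert_self n T)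

theorem card_range_sdiff {n k : ℕ} {S : Finset ℕ}
    (hS : S ∈ Finset.powersetCard k (Finset.range n)) : (Finset.range n \ S).card = n - k := by
  obtain ⟨h1, h2⟩ := Finset.mem_powersetCard.1 hS
  rw [Finset.card_sdiff_of_subset h1, h2, Finset.card_range]

theorem notMem_of_powersetCard {n k a : ℕ} {S : Finset ℕ}
    (hS : S ∈ Finset.powersetCard k (Finset.range n)) (ha : n ≤ a) : a ∉ S := fun h => by
  have := Finset.mem_range.1 ((Finset.mem_powersetCard.1 hS).1 h)
  omega

variable {n k : ℕ} {S : Finset ℕ}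

/-- In a shuffle of length `n + 2`, the step to the last entry `n + 1` contributes a descent at `n`
according to which of the positions `n`, `n + 1` are fixed points. Here both are. -/
theorem shMaj_fix_fix :
    shMaj t d (insert (n + 1) (insert n S)) (n + 2) = shMaj t d (insert n S) (n + 1) := by
  rw [shMaj_succ, shMaj_insert]
  simp [ShDes]

theorem shMaj_let_fix (hS : S ∈ Finset.powersetCard k (Finset.range n)) :
    shMaj t d (insert (n + 1) S) (n + 2) =
      shMaj t d S (n + 1) + if t (n - k) then n + 1 else 0 := by
  have h : Finset.range n \ insert (n + 1) S = Finset.range n \ S := by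
    ext x; simp only [Finset.mem_sdiff, Finset.mem_range, Finset.mem_insert]
    constructor
    · tauto
    · rintro ⟨h1, h2⟩
      exact ⟨h1, by rintro (h | h); · omega
                    · exact h2 h⟩
  rw [shMaj_succ, shMaj_insert]
  simp [ShDes, h, card_range_sdiff hS, notMem_of_powersetCard hS]

theorem shMaj_fix_let (hS : S ∈ Finset.powersetCard k (Finset.range n)) :
    shMaj t d (insert n S) (n + 2) =
      shMaj t d (insert n S) (n + 1) + if t (n - k) then 0 else n + 1 := by
  have h : Finset.range n \ insert n S = Finset.range n \ S := by
    ext x; simp only [Finset.mem_sdiff, Finset.mem_range, Finset.mem_insert]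
    constructor
    · tauto
    · rintro ⟨h1, h2⟩
      exact ⟨h1, by rintro (h | h); · omega
                    · exact h2 h⟩
  rw [shMaj_succ]
  simp [ShDes, h, card_range_sdiff hS, notMem_of_powersetCard hS]

theorem shMaj_let_let (hS : S ∈ Finset.powersetCard k (Finset.range n)) :
    shMaj t d S (n + 2) = shMaj t d S (n + 1) + if d (n - k) then n + 1 else 0 := by
  rw [shMaj_succ]
  simp [ShDes, card_range_sdiff hS, notMem_of_powersetCard hS]

theorem shA_zero_zero : shA q t d 0 0 = 1 := by simp [shA, shMaj]

theorem shB_zero_zero : shB q t d 0 0 = 1 := by simp [shB, shMaj]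

theorem shA_zero_succ (k : ℕ) : shA q t d 0 (k + 1) = shA q t d 0 k := by
  unfold shA
  rw [← Nat.add_assoc, sum_powersetCard_range_succ,
    Finset.powersetCard_eq_empty.2 (by simp : (Finset.range (0 + k)).card < k + 1),
    Finset.sum_empty, add_zero]
  exact Finset.sum_congr rfl fun S _ => by rw [shMaj_fix_fix t d]

theorem shB_zero_succ (k : ℕ) :
    shB q t d 0 (k + 1) = (if t 0 then 1 else q ^ (k + 1)) * shA q t d 0 k := by
  unfold shA shB
  rw [← Nat.add_assoc, sum_powersetCard_range_succ,
    Finset.powersetCard_eq_empty.2 (by simp : (Finset.range (0 + k)).card < k + 1),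
    Finset.sum_empty, add_zero, Finset.mul_sum]
  refine Finset.sum_congr rfl fun S hS => ?_
  rw [shMaj_fix_let t d hS]
  simp only [Nat.zero_add, Nat.sub_self]
  split_ifs <;> ring

theorem shA_succ_zero (m : ℕ) :
    shA q t d (m + 1) 0 = (if t m then q ^ (m + 1) else 1) * shB q t d m 0 := by
  unfold shA shB
  simp only [Finset.powersetCard_zero, Finset.sum_singleton, Nat.add_zero]
  rw [shMaj_let_fix t d (k := 0) (by simp), Nat.sub_zero]
  split_ifs <;> ring

theorem shB_succ_zero (m : ℕ) :
    shB q t d (m + 1) 0 = (if d m then q ^ (m + 1) else 1) * shB q t d m 0 := by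
  unfold shB
  simp only [Finset.powersetCard_zero, Finset.sum_singleton, Nat.add_zero]
  rw [shMaj_let_let t d (k := 0) (by simp), Nat.sub_zero]
  split_ifs <;> ring

theorem shA_succ_succ (m k : ℕ) :
    shA q t d (m + 1) (k + 1) =
      shA q t d (m + 1) k + (if t m then q ^ (m + k + 2) else 1) * shB q t d m (k + 1) := by
  unfold shA shB
  have e : m + (k + 1) = m + 1 + k := by ring
  rw [← Nat.add_assoc, sum_powersetCard_range_succ, Finset.mul_sum, e]
  congr 1
  · exact Finset.sum_congr rfl fun S _ => by rw [shMaj_fix_fix t d]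
  · refine Finset.sum_congr rfl fun S hS => ?_
    rw [shMaj_let_fix t d hS, show m + 1 + k - (k + 1) = m by omega,
      show m + 1 + k + 1 = m + k + 2 by ring]
    split_ifs <;> ring

theorem shB_succ_succ (m k : ℕ) :
    shB q t d (m + 1) (k + 1) =
      (if t (m + 1) then 1 else q ^ (m + k + 2)) * shA q t d (m + 1) k +
        (if d m then q ^ (m + k + 2) else 1) * shB q t d m (k + 1) := by
  unfold shA shB
  have e : m + (k + 1) = m + 1 + k := by ring
  rw [← Nat.add_assoc, sum_powersetCard_range_succ, Finset.mul_sum, Finset.mul_sum, e]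
  congr 1
  · refine Finset.sum_congr rfl fun S hS => ?_
    rw [shMaj_fix_let t d hS, show m + 1 + k - k = m + 1 by omega,
      show m + 1 + k + 1 = m + k + 2 by ring]
    split_ifs <;> ring
  · refine Finset.sum_congr rfl fun S hS => ?_
    rw [shMaj_let_let t d hS, show m + 1 + k - (k + 1) = m by omega,
      show m + 1 + k + 1 = m + k + 2 by ring]
    split_ifs <;> ring

theorem shA_zero (k : ℕ) : shA q t d 0 k = 1 := by
  induction k with
  | zero => exact shA_zero_zero q t d
  | succ k ih => rw [shA_zero_succ, ih]

/-- The closed forms of `shA` and `shB`, by simultaneous induction along the transitions. -/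
theorem shB_eq_and_shA_eq (m : ℕ) (h1 : ∀ j < m, t j → ¬ t (j + 1) → d j)
    (h2 : ∀ j < m, ¬ t j → t (j + 1) → ¬ d j) (k : ℕ) :
    shB q t d m k = (if t m then 1 else q ^ k) * q ^ wMaj d (m + 1) * qP q m k ∧
    shA q t d (m + 1) k =
      (if t m then q ^ (m + 1) else 1) * q ^ wMaj d (m + 1) * qP q (m + 1) k := by
  induction m generalizing k with
  | zero =>
    have hB : ∀ k, shB q t d 0 k = (if t 0 then 1 else q ^ k) * q ^ wMaj d 1 * qP q 0 k := by
      intro k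
      cases k with
      | zero => simp [shB_zero_zero, qP_zero_left, wMaj]
      | succ k => rw [shB_zero_succ, shA_zero]; simp [qP_zero_left, wMaj]
    refine ⟨hB k, ?_⟩
    induction k with
    | zero => rw [shA_succ_zero, hB]; simp [qP_zero_right, wMaj]
    | succ k ih =>
      rw [shA_succ_succ, ih, hB]
      split_ifs
      · rw [qP_succ_succ]; ring
      · rw [qP_succ_succ]; ring
  | succ m ih =>
    have ih := ih (fun j hj => h1 j (by omega)) (fun j hj => h2 j (by omega))
    have h1 := h1 m (by omega)
    have h2 := h2 m (by omega)
    have hB : ∀ k, shB q t d (m + 1) k =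
        (if t (m + 1) then 1 else q ^ k) * q ^ wMaj d (m + 2) * qP q (m + 1) k := by
      intro k
      cases k with
      | zero =>
        rw [shB_succ_zero, (ih 0).1, wMaj_succ, qP_zero_right, qP_zero_right]
        split_ifs <;> ring
      | succ k =>
        rw [shB_succ_succ, (ih k).2, (ih (k + 1)).1, wMaj_succ]
        by_cases a : t m <;> by_cases b : t (m + 1) <;> by_cases c : d m
        -- The two cases excluded by `h1` and `h2` are vacuous; every other one is an instance of
        -- one of the two Pascal rules.
        all_goals try (exfalso; tauto)
        all_goals simp only [a, b, c, if_true, if_false]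
        all_goals first
          | (rw [qP_succ_succ]; ring; done)
          | (rw [qP_succ_succ']; ring)
    refine ⟨hB k, ?_⟩
    induction k with
    | zero =>
      rw [shA_succ_zero, hB]; simp [qP_zero_right]
    | succ k ihk =>
      rw [shA_succ_succ, ihk, hB, qP_succ_succ q (m + 1) k]
      split_ifs <;> ring

/-- Major-index shuffle identity: summing `q ^ maj` over all placements of `k` fixed points
multiplies the weight of the word by a Gaussian binomial. -/
theorem sum_shMaj (m : ℕ) (h1 : ∀ j, j + 1 < m → t j → ¬ t (j + 1) → d j)
    (h2 : ∀ j, j + 1 < m → ¬ t j → t (j + 1) → ¬ d j) (k : ℕ) :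
    ∑ S ∈ Finset.powersetCard k (Finset.range (m + k)), q ^ shMaj t d S (m + k) =
      q ^ wMaj d m * qP q m k := by
  have hA : ∀ m k, ∑ S ∈ Finset.powersetCard k (Finset.range (m + k)),
      q ^ shMaj t d (insert (m + k) S) (m + k + 1) = shA q t d m k := fun _ _ => rfl
  have hB : ∀ m k, ∑ S ∈ Finset.powersetCard k (Finset.range (m + k)),
      q ^ shMaj t d S (m + k + 1) = shB q t d m k := fun _ _ => rfl
  cases m with
  | zero =>
    cases k with
    | zero => simp [shMaj, wMaj, qP_zero_left]
    | succ k =>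
      rw [← Nat.add_assoc, sum_powersetCard_range_succ, hA, shA_zero,
        Finset.powersetCard_eq_empty.2 (by simp : (Finset.range (0 + k)).card < k + 1)]
      simp [wMaj, qP_zero_left]
  | succ m =>
    have key := shB_eq_and_shA_eq q t d m (fun j hj => h1 j (by omega))
      (fun j hj => h2 j (by omega))
    cases k with
    | zero =>
      have := (key 0).1
      simp only [shB, Finset.powersetCard_zero, Finset.sum_singleton, Nat.add_zero] at this ⊢
      rw [this, qP_zero_right, qP_zero_right]; simp
    | succ k =>
      have e : m + 1 + k = m + (k + 1) := by ring
      rw [← Nat.add_assoc, sum_powersetCard_range_succ, hA, (key k).2, e, hB, (key (k + 1)).1]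
      split_ifs
      · rw [qP_succ_succ']; ring
      · rw [qP_succ_succ]; ring

end Shuffle

/-! ### Permutations with prescribed fixed points -/

/-- `j` is an excedance of `α`; false for `j ≥ m`. -/
def ExcAt {m : ℕ} (α : Equiv.Perm (Fin m)) (j : ℕ) : Prop :=
  ∃ h : j < m, j < (α ⟨j, h⟩ : ℕ)

/-- `j` is a (0-based) descent of `α`; false for `j + 1 ≥ m`. -/
def DesAt {m : ℕ} (α : Equiv.Perm (Fin m)) (j : ℕ) : Prop :=
  ∃ (h1 : j < m) (h2 : j + 1 < m), α ⟨j + 1, h2⟩ < α ⟨j, h1⟩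

theorem maj_eq_wMaj (n : ℕ) (σ : Equiv.Perm (Fin n)) : maj n σ = wMaj (DesAt σ) n := by
  have h : maj n σ = ∑ i ∈ Finset.range n, if DesAt σ i then i + 1 else 0 := by
    unfold maj DesSet
    rw [Finset.sum_filter]
    exact Finset.sum_congr rfl fun i _ => if_congr Iff.rfl rfl rfl
  rw [h, wMaj]
  cases n with
  | zero => rfl
  | succ n =>
    have : ¬ DesAt σ n := by rintro ⟨_, h, _⟩; omega
    simp [Finset.sum_range_succ, this]

theorem exc_eq_card (n : ℕ) (σ : Equiv.Perm (Fin n)) :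
    exc n σ = (Finset.univ.filter fun j : Fin n => j < σ j).card := by
  unfold exc
  rw [← Finset.card_map Fin.valEmbedding]
  congr 1
  ext i
  simp only [Finset.mem_filter, Finset.mem_range, Finset.mem_map, Finset.mem_univ, true_and,
    Fin.valEmbedding_apply, Fin.lt_def]
  constructor
  · rintro ⟨-, h, h'⟩
    exact ⟨⟨i, h⟩, h', rfl⟩
  · rintro ⟨j, h, rfl⟩
    exact ⟨j.2, j.2, h⟩

section Inflate

variable {m n : ℕ} {S : Finset ℕ} (e : Fin m ↪o Fin n) {α : Equiv.Perm (Fin m)}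
  {σ : Equiv.Perm (Fin n)}

/-- The letter standing at position `e j` has index `j`. -/
theorem rank_eq (hS : ∀ x : Fin n, (x : ℕ) ∈ S ↔ x ∉ Set.range e) (j : Fin m) :
    (Finset.range (e j) \ S).card = j := by
  have : Finset.range (e j) \ S = (Finset.Iio j).map (e.toEmbedding.trans Fin.valEmbedding) := by
    ext i
    simp only [Finset.mem_sdiff, Finset.mem_range, Finset.mem_map, Finset.mem_Iio]
    constructor
    · rintro ⟨h1, h2⟩
      have hi := h2
      rw [hS ⟨i, h1.trans (e j).2⟩, not_not] at hi
      obtain ⟨l, hl⟩ := hi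
      refine ⟨l, ?_, by simp [hl]⟩
      rw [← e.lt_iff_lt, hl]
      exact h1
    · rintro ⟨l, hl, rfl⟩
      have := e.lt_iff_lt.2 hl
      refine ⟨this, ?_⟩
      simp only [Function.Embedding.trans_apply, Fin.valEmbedding_apply]
      rw [hS]
      simp
  rw [this, Finset.card_map, Fin.card_Iio]

/-- Inflating a derangement by fixed points produces the descents described by `ShDes`: an
excedance at `i` exceeds `i` and an anti-excedance at `i` is below `i`, so comparisons between a
fixed point and an adjacent letter, or between adjacent letters of different kinds, are forced. -/
theorem desAt_iff_shDes (hS : ∀ x : Fin n, (x : ℕ) ∈ S ↔ x ∉ Set.range e)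
    (hα : ∀ j, α j ≠ j) (he : ∀ j, σ (e j) = e (α j))
    (hf : ∀ x : Fin n, (x : ℕ) ∈ S → σ x = x) (i : ℕ) (hi : i + 1 < n) :
    DesAt σ i ↔ ShDes (ExcAt α) (DesAt α) S i := by
  have hD : DesAt σ i ↔ σ ⟨i + 1, hi⟩ < σ ⟨i, by omega⟩ :=
    ⟨fun ⟨_, _, h⟩ => h, fun h => ⟨_, _, h⟩⟩
  have hE : ∀ j : Fin m, ExcAt α j ↔ j < α j := fun j => ⟨fun ⟨_, h⟩ => h, fun h => ⟨j.2, h⟩⟩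
  have hne : ∀ x : Fin n, (x : ℕ) ∈ S → ∀ j, (e j : ℕ) ≠ x := fun x hx j h =>
    (hS x).1 hx ⟨j, Fin.ext h⟩
  have hex : ∀ x : Fin n, (x : ℕ) ∉ S → ∃ j, e j = x := fun x hx => by
    rw [hS, not_not] at hx; exact hx
  rw [hD, ShDes]
  by_cases h0 : i ∈ S <;> by_cases h1 : i + 1 ∈ S
  · have a0 := hf ⟨i, by omega⟩ h0
    have a1 := hf ⟨i + 1, hi⟩ h1
    simp [h0, h1, a0, a1]
  · obtain ⟨j, hj⟩ := hex ⟨i + 1, hi⟩ h1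
    have hj' : (e j : ℕ) = i + 1 := by rw [hj]
    have hr : (Finset.range i \ S).card = j := by
      rw [← rank_eq e hS j, hj', Finset.range_add_one, Finset.insert_sdiff_of_mem _ h0]
    rw [if_pos h0, if_neg h1, hr, hE, hf ⟨i, _⟩ h0, ← hj, he]
    have a := hne ⟨i, by omega⟩ h0 (α j)
    have b : e j < e (α j) ↔ j < α j := e.lt_iff_lt
    have c : e (α j) ≠ e j := fun h => hα j (e.injective h)
    rw [← b, Fin.lt_def, Fin.lt_def]
    rw [Ne, Fin.ext_iff] at c
    simp only at a ⊢
    omega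
  · obtain ⟨j, hj⟩ := hex ⟨i, by omega⟩ h0
    have hj' : (e j : ℕ) = i := by rw [hj]
    have hr : (Finset.range i \ S).card = j := by rw [← rank_eq e hS j, hj']
    rw [if_neg h0, if_pos h1, hr, hE, hf ⟨i + 1, _⟩ h1, ← hj, he]
    have a := hne ⟨i + 1, hi⟩ h1 (α j)
    have b : e j < e (α j) ↔ j < α j := e.lt_iff_lt
    rw [← b, Fin.lt_def, Fin.lt_def]
    simp only at a ⊢
    omega
  · obtain ⟨j, hj⟩ := hex ⟨i, by omega⟩ h0
    obtain ⟨l, hl⟩ := hex ⟨i + 1, hi⟩ h1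
    have hj' : (e j : ℕ) = i := by rw [hj]
    have hl' : (e l : ℕ) = i + 1 := by rw [hl]
    have hr : (Finset.range i \ S).card = j := by rw [← rank_eq e hS j, hj']
    have hjl : (l : ℕ) = j + 1 := by
      rw [← hr, ← rank_eq e hS l, hl', Finset.range_add_one, Finset.insert_sdiff_of_notMem _ h0,
        Finset.card_insert_of_notMem (by simp)]
    rw [if_neg h0, if_neg h1, hr, ← hj, ← hl, he, he, e.lt_iff_lt]
    have hlt : (j : ℕ) + 1 < m := hjl ▸ l.2
    have hl2 : l = ⟨j + 1, hlt⟩ := Fin.ext hjl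
    subst hl2
    exact ⟨fun h => ⟨j.2, hlt, h⟩, fun ⟨_, _, h⟩ => h⟩

theorem maj_inflate (hS : ∀ x : Fin n, (x : ℕ) ∈ S ↔ x ∉ Set.range e)
    (hα : ∀ j, α j ≠ j) (he : ∀ j, σ (e j) = e (α j))
    (hf : ∀ x : Fin n, (x : ℕ) ∈ S → σ x = x) :
    maj n σ = shMaj (ExcAt α) (DesAt α) S n := by
  rw [maj_eq_wMaj, wMaj, shMaj]
  refine Finset.sum_congr rfl fun i hi => ?_
  have hi : i < n - 1 := Finset.mem_range.1 hi
  simp only [desAt_iff_shDes e hS hα he hf i (by omega)]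

theorem exc_inflate (hS : ∀ x : Fin n, (x : ℕ) ∈ S ↔ x ∉ Set.range e)
    (he : ∀ j, σ (e j) = e (α j)) (hf : ∀ x : Fin n, (x : ℕ) ∈ S → σ x = x) :
    exc n σ = exc m α := by
  rw [exc_eq_card, exc_eq_card, ← Finset.card_map e.toEmbedding]
  congr 1
  ext x
  simp only [Finset.mem_filter, Finset.mem_univ, true_and, Finset.mem_map,
    RelEmbedding.coe_toEmbedding]
  constructor
  · intro h
    by_cases hx : (x : ℕ) ∈ S
    · rw [hf x hx] at h; exact absurd h (lt_irrefl _)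
    · rw [hS, not_not] at hx
      obtain ⟨j, rfl⟩ := hx
      rw [he, e.lt_iff_lt] at h
      exact ⟨j, h, rfl⟩
  · rintro ⟨j, hj, rfl⟩
    rw [he, e.lt_iff_lt]; exact hj

end Inflate

/-- The set of fixed points of `σ`, as a set of natural numbers. -/
noncomputable def fixSet {n : ℕ} (σ : Equiv.Perm (Fin n)) : Finset ℕ :=
  (Finset.univ.filter fun i => σ i = i).map Fin.valEmbedding

theorem mem_fixSet {n : ℕ} (σ : Equiv.Perm (Fin n)) (x : Fin n) :
    (x : ℕ) ∈ fixSet σ ↔ σ x = x := by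
  simp [fixSet, Fin.val_inj]

/-- The permutations with fixed-point set `S` correspond to derangements of the complement of `S`,
by standardization. -/
theorem sum_fixSet_eq (m k : ℕ) (S : Finset ℕ)
    (hS : S ∈ Finset.powersetCard k (Finset.range (m + k))) :
    ∑ σ ∈ (Finset.univ : Finset (Equiv.Perm (Fin (m + k)))).filter (fun σ => fixSet σ = S),
        qv ^ maj (m + k) σ * tv ^ exc (m + k) σ =
      ∑ α ∈ (Finset.univ : Finset (Equiv.Perm (Fin m))).filter (fun α => ∀ i, α i ≠ i),
        qv ^ shMaj (ExcAt α) (DesAt α) S (m + k) * tv ^ exc m α := by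
  obtain ⟨hsub, hcard⟩ := Finset.mem_powersetCard.1 hS
  let G : Finset (Fin (m + k)) := Finset.univ.filter fun x => (x : ℕ) ∉ S
  have hG : ∀ x, x ∈ G ↔ (x : ℕ) ∉ S := fun x => by simp [G]
  have hGc : G.card = m := by
    have h : G.map Fin.valEmbedding = Finset.range (m + k) \ S := by
      ext i
      simp only [Finset.mem_map, hG, Fin.valEmbedding_apply, Finset.mem_sdiff, Finset.mem_range]
      constructor
      · rintro ⟨x, hx, rfl⟩; exact ⟨x.2, hx⟩
      · rintro ⟨h, h'⟩; exact ⟨⟨i, h⟩, h', rfl⟩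
    rw [← Finset.card_map Fin.valEmbedding, h, card_range_sdiff hS, Nat.add_sub_cancel]
  let e' : Fin m ≃ {x // x ∈ G} := (G.orderIsoOfFin hGc).toEquiv
  let e : Fin m ↪o Fin (m + k) := G.orderEmbOfFin hGc
  have hee : ∀ j, (e' j : Fin (m + k)) = e j := fun j => rfl
  have hre : ∀ x : Fin (m + k), (x : ℕ) ∈ S ↔ x ∉ Set.range e := fun x => by
    rw [Finset.range_orderEmbOfFin, Finset.mem_coe, hG, not_not]
  have hSfix : ∀ σ : Equiv.Perm (Fin (m + k)),
      fixSet σ = S ↔ ∀ x : Fin (m + k), σ x = x ↔ (x : ℕ) ∈ S := by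
    intro σ
    constructor
    · rintro rfl x; exact (mem_fixSet σ x).symm
    · intro h
      ext i
      by_cases hi : i < m + k
      · rw [← h ⟨i, hi⟩, ← mem_fixSet]
      · refine iff_of_false (fun h => ?_) (fun h => hi (Finset.mem_range.1 (hsub h)))
        obtain ⟨x, -, rfl⟩ := Finset.mem_map.1 h
        exact hi x.2
  have hx : ∀ (α : Equiv.Perm (Fin m)) j, α.extendDomain e' (e j) = e (α j) := fun α j => by
    rw [← hee, Equiv.Perm.extendDomain_apply_image, hee]
  have hxS : ∀ (α : Equiv.Perm (Fin m)) (x : Fin (m + k)), (x : ℕ) ∈ S →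
      α.extendDomain e' x = x := fun α x hxS =>
    Equiv.Perm.extendDomain_apply_not_subtype _ _ (by rw [hG, not_not]; exact hxS)
  symm
  refine Finset.sum_bij (fun α _ => α.extendDomain e') ?_ ?_ ?_ ?_
  · intro α hα
    rw [Finset.mem_filter] at hα ⊢
    refine ⟨Finset.mem_univ _, (hSfix _).2 fun x => ⟨fun h => ?_, hxS α x⟩⟩
    rw [hre]
    rintro ⟨j, rfl⟩
    rw [hx] at h
    exact hα.2 j (e.injective h)
  · intro α _ β _ h
    ext j
    have := congrArg (fun σ : Equiv.Perm (Fin (m + k)) => σ (e j)) h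
    simp only [hx] at this
    rw [e.injective this]
  · intro σ hσ
    have hσ := (hSfix σ).1 (Finset.mem_filter.1 hσ).2
    have hp : ∀ x, σ x ∈ G ↔ x ∈ G := fun x => by
      rw [hG, hG, not_iff_not, ← hσ, ← hσ, EmbeddingLike.apply_eq_iff_eq]
    let α : Equiv.Perm (Fin m) := e'.symm.permCongr (σ.subtypePerm hp)
    have hα : ∀ j, e (α j) = σ (e j) := fun j => by
      rw [← hee, ← hee]
      simp [α, Equiv.permCongr_apply]
    refine ⟨α, ?_, ?_⟩
    · rw [Finset.mem_filter]
      refine ⟨Finset.mem_univ _, fun j hj => ?_⟩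
      have := hα j
      rw [hj] at this
      exact (hre _).1 ((hσ _).1 this.symm) ⟨j, rfl⟩
    · refine Equiv.ext fun x => ?_
      by_cases hxs : (x : ℕ) ∈ S
      · rw [hxS α x hxs, (hσ x).2 hxs]
      · rw [hre, not_not] at hxs
        obtain ⟨j, rfl⟩ := hxs
        rw [hx, hα]
  · intro α hα
    rw [maj_inflate e hre (Finset.mem_filter.1 hα).2 (hx α) (hxS α),
      exc_inflate e hre (hx α) (hxS α)]

theorem sum_fixpts_eq (n m k : ℕ) (h : n = m + k) :
    (∑ σ ∈ (Finset.univ : Finset (Equiv.Perm (Fin n))).filter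
        (fun σ => fixpts n σ = k), qv ^ maj n σ * tv ^ exc n σ) =
    qbinom qv n k *
      ∑ σ ∈ (Finset.univ : Finset (Equiv.Perm (Fin m))).filter
        (fun σ => ∀ i, σ i ≠ i), qv ^ maj m σ * tv ^ exc m σ := by
  subst h
  have hmaps : ∀ σ ∈ (Finset.univ : Finset (Equiv.Perm (Fin (m + k)))).filter
      (fun σ => fixpts (m + k) σ = k),
      fixSet σ ∈ Finset.powersetCard k (Finset.range (m + k)) := by
    intro σ hσ
    rw [Finset.mem_powersetCard]
    refine ⟨fun i hi => ?_, ?_⟩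
    · obtain ⟨x, -, rfl⟩ := Finset.mem_map.1 hi
      exact Finset.mem_range.2 x.2
    · rw [fixSet, Finset.card_map]
      exact (Finset.mem_filter.1 hσ).2
  rw [← Finset.sum_fiberwise_of_maps_to hmaps]
  have hstep : ∀ S ∈ Finset.powersetCard k (Finset.range (m + k)),
      ∑ σ ∈ ((Finset.univ : Finset (Equiv.Perm (Fin (m + k)))).filter
        (fun σ => fixpts (m + k) σ = k)).filter (fun σ => fixSet σ = S),
        qv ^ maj (m + k) σ * tv ^ exc (m + k) σ =
      ∑ α ∈ (Finset.univ : Finset (Equiv.Perm (Fin m))).filter (fun α => ∀ i, α i ≠ i),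
        qv ^ shMaj (ExcAt α) (DesAt α) S (m + k) * tv ^ exc m α := by
    intro S hS
    rw [← sum_fixSet_eq m k S hS, Finset.filter_filter]
    refine Finset.sum_congr (Finset.filter_congr fun σ _ => ?_) fun _ _ => rfl
    refine and_iff_right_of_imp fun h => ?_
    have := (Finset.mem_powersetCard.1 hS).2
    rwa [← h, fixSet, Finset.card_map] at this
  rw [Finset.sum_congr rfl hstep, Finset.sum_comm, Finset.mul_sum]
  refine Finset.sum_congr rfl fun α hα => ?_
  have hα := (Finset.mem_filter.1 hα).2
  -- If `j` is an excedance and `j + 1` is not, then `α (j + 1) ≤ j < α j` since `j + 1` is not a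
  -- fixed point; if `j + 1` is an excedance and `j` is not, then `α j ≤ j < j + 1 < α (j + 1)`.
  have hsh := sum_shMaj qv (ExcAt α) (DesAt α) m ?_ ?_ k
  · rw [← Finset.sum_mul, hsh, maj_eq_wMaj, qP]; ring
  · rintro j hj ⟨h, h1⟩ h2
    refine ⟨h, hj, ?_⟩
    have h2 : ¬ j + 1 < (α ⟨j + 1, hj⟩ : ℕ) := fun h => h2 ⟨hj, h⟩
    have h3 : (α ⟨j + 1, hj⟩ : ℕ) ≠ j + 1 := fun h => hα ⟨j + 1, hj⟩ (Fin.ext h)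
    rw [Fin.lt_def]
    omega
  · rintro j hj h1 ⟨_, h2⟩ ⟨h, _, h3⟩
    have h1 : ¬ j < (α ⟨j, h⟩ : ℕ) := fun h' => h1 ⟨h, h'⟩
    rw [Fin.lt_def] at h3
    omega

/-- For `0 ≤ k ≤ n`,
`Σ_{σ ∈ S_n, fix σ = k} q^{maj σ} t^{exc σ}
  = [n choose k]_q · Σ_{σ ∈ D_{n−k}} q^{maj σ} t^{exc σ}`. -/
theorem fix_maj_exc_derangement (n k : ℕ) (hk : k ≤ n) :
    (∑ σ ∈ (Finset.univ : Finset (Equiv.Perm (Fin n))).filter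
        (fun σ => fixpts n σ = k), qv ^ maj n σ * tv ^ exc n σ) =
    qbinom qv n k *
      ∑ σ ∈ (Finset.univ : Finset (Equiv.Perm (Fin (n - k)))).filter
        (fun σ => ∀ i, σ i ≠ i), qv ^ maj (n - k) σ * tv ^ exc (n - k) σ := by
  exact sum_fixpts_eq n (n - k) k (by omega)
end

section
/- The statistic aid := ai + des is Mahonian: for all n, Σ_{σ ∈ S_n} q^{ai(σ)+des(σ)} = [n]_q!. -/
/-!
Split a word of `n + 1` distinct letters at its smallest letter `m`, as `A m B` with `A` of length
`k`. Every inversion between a letter of `A` and a letter of `B` is admissible, since `m` lies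
between them; the inversions ending at `m` are admissible exactly when `B` is nonempty; and the
admissible inversions inside `A` and inside `B` are those of `A` and `B` as words, because the last
letter of `A` is followed by the smaller letter `m`. The only new descent is the one into `m`, when
`A` is nonempty. So (`Aid.laid_split`)

  `aid(A m B) = aid A + aid B + inv(A, B) + c(k, n - k)`, `c(k, r) = k·[r > 0] + [k > 0]`.

Summing over all words, by induction the words `A` and `B` contribute `[k]_q!` and `[n - k]_q!`,
and the choice of the set of letters of `A` contributes the Gaussian binomial coefficient
`Σ q^inv(A, B) = [n]_q! / ([k]_q! [n - k]_q!)` (`Aid.G_mul`). What is left is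
`[n]_q! Σ_k q^c(k, n - k)`. The exponents `c(k, n - k)` for `k = 0, 1, …, n - 1, n` are
`0, 2, 3, …, n, 1`, so the sum over `k` is `[n + 1]_q` (`Aid.sum_corr`).
-/

open scoped Classical

/-- Descent number. -/
noncomputable def des (n : ℕ) (σ : Equiv.Perm (Fin n)) : ℕ := (DesSet n σ).card

/-- The number of admissible inversions of `σ`: pairs of positions `i < j` with
`σ(i) > σ(j)` such that either `j < n` and `σ(j) < σ(j+1)`, or there is some `k`
with `i < k < j` and `σ(k) < σ(j)`. -/
noncomputable def ai (n : ℕ) (σ : Equiv.Perm (Fin n)) : ℕ :=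
  Set.ncard {pr : Fin n × Fin n |
    pr.1 < pr.2 ∧ σ pr.2 < σ pr.1 ∧
      ((∃ j' : Fin n, (j' : ℕ) = (pr.2 : ℕ) + 1 ∧ σ pr.2 < σ j') ∨
        ∃ k : Fin n, pr.1 < k ∧ k < pr.2 ∧ σ k < σ pr.2)}

/-- `[m]_q`. -/
def qint {R : Type*} [CommSemiring R] (q : R) (m : ℕ) : R :=
  ∑ i ∈ Finset.range m, q ^ i

/-- `[m]_q!`. -/
def qfact {R : Type*} [CommSemiring R] (q : R) (m : ℕ) : R :=
  ∏ i ∈ Finset.range m, qint q (i + 1)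

namespace Aid

open Finset

/-! ### The statistic on words, and its splitting at the smallest letter -/

/-- Positions of the admissible inversions of the word `f s, f (s+1), …, f (t-1)`. Encoding a word
as an interval of a function on `ℕ` makes its factors subintervals, with no reindexing. -/
noncomputable def wInv (f : ℕ → ℕ) (s t : ℕ) : Finset (ℕ × ℕ) :=
  (Ico s t ×ˢ Ico s t).filter fun p => p.1 < p.2 ∧ f p.2 < f p.1 ∧
    ((p.2 + 1 < t ∧ f p.2 < f (p.2 + 1)) ∨ ∃ k, p.1 < k ∧ k < p.2 ∧ f k < f p.2)

/-- Descent positions of the word `f s, f (s+1), …, f (t-1)`. -/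
noncomputable def wDes (f : ℕ → ℕ) (s t : ℕ) : Finset ℕ :=
  (Ico s t).filter fun i => i + 1 < t ∧ f (i + 1) < f i

/-- The statistic `aid` of the word `f s, f (s+1), …, f (t-1)`. -/
noncomputable def waid (f : ℕ → ℕ) (s t : ℕ) : ℕ := (wInv f s t).card + (wDes f s t).card

/-- The contribution to `aid` of the smallest letter of a word, when it is preceded by `p` letters
and followed by `r` letters. -/
def corr (p r : ℕ) : ℕ := (if 0 < r then p else 0) + (if 0 < p then 1 else 0)

/-- The inversions with one end on each side of position `p`. -/
noncomputable def cross (f : ℕ → ℕ) (p n : ℕ) : Finset (ℕ × ℕ) :=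
  (range p ×ˢ Ico (p + 1) n).filter fun x => f x.2 < f x.1

lemma card_wDes_split (f : ℕ → ℕ) (p r : ℕ)
    (hp : ∀ i < p + 1 + r, i ≠ p → f p < f i) :
    (wDes f 0 (p + 1 + r)).card =
      (wDes f 0 p).card + (wDes f (p + 1) (p + 1 + r)).card + (if 0 < p then 1 else 0) := by
  have h : wDes f 0 (p + 1 + r) =
      (wDes f 0 p ∪ wDes f (p + 1) (p + 1 + r)) ∪ (if 0 < p then {p - 1} else ∅) := by
    ext i
    simp only [wDes, mem_union, mem_filter, mem_Ico]
    have h1 := hp i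
    have h2 := hp (i + 1)
    split_ifs with h0
    · simp only [mem_singleton]
      rcases lt_trichotomy (i + 1) p with h | h | h
      · grind
      · subst h; grind
      · rcases Nat.lt_or_ge p i with h' | h'
        · grind
        · obtain rfl : i = p := by omega
          grind
    · obtain rfl : p = 0 := by omega
      simp only [notMem_empty]
      rcases Nat.eq_zero_or_pos i with rfl | h' <;> grind
  rw [h, card_union_of_disjoint, card_union_of_disjoint]
  · split_ifs <;> simp
  · rw [disjoint_left]; simp only [wDes, mem_filter, mem_Ico]; grind
  · rw [disjoint_left]; simp only [wDes, mem_union, mem_filter, mem_Ico]; split_ifs <;> grind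

/-- At a position `p` where the word is smallest, every inversion across `p` is admissible because
of `p` itself, while an inversion ending at `p` is admissible exactly when `p` is not the last
position. The last position before `p` is followed by a smaller letter, so it behaves like the end
of a word. -/
lemma card_wInv_split (f : ℕ → ℕ) (p r : ℕ)
    (hp : ∀ i < p + 1 + r, i ≠ p → f p < f i) :
    (wInv f 0 (p + 1 + r)).card =
      (wInv f 0 p).card + (wInv f (p + 1) (p + 1 + r)).card + (cross f p (p + 1 + r)).card
        + (if 0 < r then p else 0) := by
  have h : wInv f 0 (p + 1 + r) =
      ((wInv f 0 p ∪ wInv f (p + 1) (p + 1 + r)) ∪ cross f p (p + 1 + r)) ∪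
        (if 0 < r then range p ×ˢ {p} else ∅) := by
    ext ⟨i, j⟩
    have hE : (i, j) ∈ (if 0 < r then range p ×ˢ {p} else ∅ : Finset (ℕ × ℕ)) ↔
        0 < r ∧ i < p ∧ j = p := by
      split_ifs with h0 <;> simp [h0, eq_comm]
    simp only [mem_union, hE]
    simp only [wInv, cross, mem_filter, mem_product, mem_Ico, mem_range]
    have hi := hp i
    have hj := hp j
    rcases lt_trichotomy j p with h | h | h
    · -- both positions lie left of `p`
      have : j + 1 = p ∨ j + 1 < p := by omega
      rcases this with h' | h'
      · subst h'; grind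
      · grind
    · subst h
      have h2 := hp (j + 1)
      have h3 : ∀ k, k < j → ¬ f k < f j := fun k hk => by have := hp k; grind
      grind
    · rcases lt_trichotomy i p with h' | h' | h'
      · grind
      · subst h'; grind
      · grind
  rw [h, card_union_of_disjoint, card_union_of_disjoint, card_union_of_disjoint]
  · split_ifs <;> simp
  · rw [disjoint_left]; rintro ⟨i, j⟩
    simp only [wInv, mem_filter, mem_product, mem_Ico]; grind
  · rw [disjoint_left]; rintro ⟨i, j⟩
    simp only [wInv, cross, mem_union, mem_filter, mem_product, mem_Ico, mem_range]; grind
  · rw [disjoint_left]; rintro ⟨i, j⟩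
    simp only [wInv, cross, mem_union, mem_filter, mem_product, mem_Ico, mem_range]
    split_ifs <;> (simp; try grind)

lemma waid_split (f : ℕ → ℕ) (p r : ℕ) (hp : ∀ i < p + 1 + r, i ≠ p → f p < f i) :
    waid f 0 (p + 1 + r) = waid f 0 p + waid f (p + 1) (p + 1 + r)
      + (cross f p (p + 1 + r)).card + corr p r := by
  simp only [waid, corr, card_wDes_split f p r hp, card_wInv_split f p r hp]
  ring

/-- `waid f s (s + t)` depends only on the word `f s, …, f (s + t - 1)`. -/
lemma waid_congr (f g : ℕ → ℕ) (s t : ℕ) (h : ∀ i < t, f (s + i) = g i) :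
    waid f s (s + t) = waid g 0 t := by
  unfold waid
  congr 1
  · symm
    apply card_bij (fun x _ => (s + x.1, s + x.2))
    · rintro ⟨i, j⟩ hx
      simp only [wInv, mem_filter, mem_product, mem_Ico] at hx ⊢
      obtain ⟨h1, h2, h3, h4⟩ := hx
      refine ⟨by omega, by omega, by rw [h _ h1.1.2, h _ h1.2.2]; exact h3, ?_⟩
      rcases h4 with h4 | ⟨k, h4⟩
      · left
        rw [h _ h1.2.2, add_assoc, h _ h4.1]; exact ⟨by omega, h4.2⟩
      · right
        refine ⟨s + k, by omega, by omega, ?_⟩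
        rw [h _ h1.2.2, h _ (by omega)]; exact h4.2.2
    · rintro ⟨i, j⟩ _ ⟨i', j'⟩ _ he
      simp only [Prod.mk.injEq] at he ⊢; omega
    · rintro ⟨i, j⟩ hx
      simp only [wInv, mem_filter, mem_product, mem_Ico] at hx
      obtain ⟨h1, h2, h3, h4⟩ := hx
      obtain ⟨i, rfl⟩ := Nat.exists_eq_add_of_le h1.1.1
      obtain ⟨j, rfl⟩ := Nat.exists_eq_add_of_le h1.2.1
      refine ⟨(i, j), ?_, rfl⟩
      simp only [wInv, mem_filter, mem_product, mem_Ico]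
      rw [h j (by omega), h i (by omega)] at h3
      refine ⟨by omega, by omega, h3, ?_⟩
      rw [h j (by omega)] at h4
      rcases h4 with h4 | ⟨k, h4⟩
      · left
        rw [add_assoc, h _ (by omega)] at h4; exact ⟨by omega, h4.2⟩
      · right
        obtain ⟨k, rfl⟩ := Nat.exists_eq_add_of_le (show s ≤ k by omega)
        rw [h _ (by omega)] at h4
        exact ⟨k, by omega, by omega, h4.2.2⟩
  · symm
    apply card_bij (fun x _ => s + x)
    · intro i hx
      simp only [wDes, mem_filter, mem_Ico] at hx ⊢
      refine ⟨by omega, by omega, ?_⟩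
      rw [add_assoc, h _ hx.2.1, h _ (by omega)]; exact hx.2.2
    · intro i _ i' _ he
      omega
    · intro i hx
      simp only [wDes, mem_filter, mem_Ico] at hx
      obtain ⟨i, rfl⟩ := Nat.exists_eq_add_of_le hx.1.1
      refine ⟨i, ?_, rfl⟩
      rw [add_assoc, h _ (by omega), h _ (by omega)] at hx
      simp only [wDes, mem_filter, mem_Ico]
      exact ⟨by omega, by omega, hx.2.2⟩

/-- The statistic `aid` of a list of natural numbers. -/
noncomputable def laid (l : List ℕ) : ℕ := waid (fun i => l.getD i 0) 0 l.length

/-- The number of pairs `(x, y) ∈ A × B` with `x > y`. -/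
noncomputable def inv (A B : Finset ℕ) : ℕ := ((A ×ˢ B).filter fun x => x.2 < x.1).card

lemma laid_split (a b : List ℕ) (m : ℕ) (ha : ∀ x ∈ a, m < x) (hb : ∀ x ∈ b, m < x)
    (hna : a.Nodup) (hnb : b.Nodup) :
    laid (a ++ m :: b) = laid a + laid b + inv a.toFinset b.toFinset
      + corr a.length b.length := by
  have hl : (a ++ m :: b).length = a.length + 1 + b.length := by simp; omega
  have g1 : ∀ i < a.length, (a ++ m :: b).getD i 0 = a.getD i 0 := fun i hi =>
    List.getD_append _ _ _ _ hi
  have g2 : (a ++ m :: b).getD a.length 0 = m := by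
    rw [List.getD_append_right _ _ _ _ le_rfl]; simp
  have g3 : ∀ i, (a ++ m :: b).getD (a.length + 1 + i) 0 = b.getD i 0 := fun i => by
    rw [List.getD_append_right _ _ _ _ (by omega),
      show a.length + 1 + i - a.length = i + 1 by omega]; simp
  have ma : ∀ i < a.length, a.getD i 0 ∈ a := fun i hi => by
    rw [List.getD_eq_getElem _ _ hi]; exact List.getElem_mem hi
  have mb : ∀ i < b.length, b.getD i 0 ∈ b := fun i hi => by
    rw [List.getD_eq_getElem _ _ hi]; exact List.getElem_mem hi
  unfold laid
  rw [hl, waid_split]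
  · congr 1
    congr 1
    · congr 1
      · have := waid_congr (fun i => (a ++ m :: b).getD i 0) (fun i => a.getD i 0) 0 a.length
          (fun i hi => by simpa using g1 i hi)
        simpa using this
      · exact waid_congr _ _ _ _ (fun i _ => g3 i)
    · unfold inv cross
      apply card_bij (fun x _ => ((a ++ m :: b).getD x.1 0, (a ++ m :: b).getD x.2 0))
      · rintro ⟨i, j⟩ hx
        simp only [mem_filter, mem_product, mem_range, mem_Ico, List.mem_toFinset] at hx ⊢
        obtain ⟨j, rfl⟩ := Nat.exists_eq_add_of_le hx.1.2.1
        refine ⟨⟨?_, ?_⟩, hx.2⟩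
        · rw [g1 _ hx.1.1]; exact ma _ hx.1.1
        · rw [g3]; exact mb _ (by omega)
      · rintro ⟨i, j⟩ hx ⟨i', j'⟩ hx' he
        simp only [mem_filter, mem_product, mem_range, mem_Ico] at hx hx'
        obtain ⟨j, rfl⟩ := Nat.exists_eq_add_of_le hx.1.2.1
        obtain ⟨j', rfl⟩ := Nat.exists_eq_add_of_le hx'.1.2.1
        have hi : i < a.length := hx.1.1
        have hi' : i' < a.length := hx'.1.1
        have hj : j < b.length := by omega
        have hj' : j' < b.length := by omega
        simp only [Prod.mk.injEq] at he ⊢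
        rw [g1 _ hi, g1 _ hi', g3, g3, List.getD_eq_getElem _ _ hi,
          List.getD_eq_getElem _ _ hi', List.getD_eq_getElem _ _ hj,
          List.getD_eq_getElem _ _ hj', hna.getElem_inj_iff, hnb.getElem_inj_iff] at he
        omega
      · rintro ⟨x, y⟩ hx
        simp only [mem_filter, mem_product, List.mem_toFinset] at hx
        obtain ⟨⟨h1, h2⟩, h3⟩ := hx
        obtain ⟨i, hi, rfl⟩ := List.getElem_of_mem h1
        obtain ⟨j, hj, rfl⟩ := List.getElem_of_mem h2
        have e1 := g1 i hi
        have e2 := g3 j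
        rw [List.getD_eq_getElem a _ hi] at e1
        rw [List.getD_eq_getElem b _ hj] at e2
        refine ⟨(i, a.length + 1 + j), ?_, by simp only [e1, e2]⟩
        simp only [mem_filter, mem_product, mem_range, mem_Ico, e1, e2]
        exact ⟨⟨hi, by omega, by omega⟩, h3⟩
  · intro i hi hne
    rw [g2]
    rcases Nat.lt_or_ge i a.length with h | h
    · rw [g1 i h]; exact ha _ (ma i h)
    · obtain ⟨j, rfl⟩ := Nat.exists_eq_add_of_le (show a.length + 1 ≤ i by omega)
      rw [g3]; exact hb _ (mb j (by omega))

/-! ### Recursion for the generating polynomial -/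

open Polynomial

/-- The arrangements of the set `S`: the lists in which every element of `S` occurs exactly once
and nothing else occurs. -/
noncomputable def arr (S : Finset ℕ) : Finset (List ℕ) := S.val.lists.toFinset

/-- The generating polynomial of `aid` over all arrangements of the set `S`. -/
noncomputable def F (S : Finset ℕ) : ℤ[X] := ∑ l ∈ arr S, X ^ laid l

lemma mem_arr (S : Finset ℕ) (l : List ℕ) :
    l ∈ arr S ↔ l.Nodup ∧ l.toFinset = S := by
  rw [arr, Multiset.mem_toFinset, Multiset.mem_lists_iff]
  constructor
  · intro h
    have h' : (l : Multiset ℕ) = S.val := h.symm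
    have hn : l.Nodup := by
      rw [← Multiset.coe_nodup, h']; exact S.nodup
    refine ⟨hn, ?_⟩
    ext x
    rw [List.mem_toFinset, ← Multiset.mem_coe, h', mem_val]
  · rintro ⟨hn, rfl⟩
    rw [List.toFinset_val, hn.dedup]; rfl

lemma F_empty : F ∅ = 1 := by
  unfold F
  have : arr ∅ = {[]} := by
    ext l
    rw [mem_arr]; simp +contextual [List.toFinset_eq_empty_iff]
  rw [this]
  simp [laid, waid, wInv, wDes]

/-- An arrangement of `insert m T` with `m` smallest is uniquely `a ++ m :: b`, where `a` arranges
a subset `A` of `T` and `b` arranges `T \ A`. -/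
lemma F_insert (m : ℕ) (T : Finset ℕ) (hm : ∀ x ∈ T, m < x) :
    F (insert m T) = ∑ A ∈ T.powerset,
      X ^ (inv A (T \ A) + corr A.card (T \ A).card) * (F A * F (T \ A)) := by
  have hmT : m ∉ T := fun h => lt_irrefl _ (hm m h)
  simp_rw [F, sum_mul_sum, ← sum_product', mul_sum, sum_sigma']
  symm
  apply sum_bij (fun (x : (_ : Finset ℕ) × (List ℕ × List ℕ)) _ => x.2.1 ++ m :: x.2.2)
  · rintro ⟨A, a, b⟩ hx
    simp only [mem_sigma, mem_powerset, mem_product, mem_arr] at hx ⊢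
    obtain ⟨hA, ⟨hna, rfl⟩, hnb, hb⟩ := hx
    constructor
    · rw [List.nodup_append]
      have : ∀ x, x ∈ b ↔ x ∈ T ∧ x ∉ a := fun x => by
        rw [← List.mem_toFinset, hb]; simp
      have ha : ∀ x ∈ a, x ∈ T := fun x hx => hA (by simpa using hx)
      simp only [List.nodup_cons, List.mem_cons]
      grind
    · ext x
      have hb' := Finset.ext_iff.1 hb x
      have hA' := @hA x
      simp only [List.mem_toFinset, mem_sdiff, List.mem_append, List.mem_cons, mem_insert] at *
      tauto
  · rintro ⟨A, a, b⟩ hx ⟨A', a', b'⟩ hx' he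
    simp only [mem_sigma, mem_powerset, mem_product, mem_arr] at hx hx'
    obtain ⟨hA, ⟨hna, rfl⟩, hnb, hb⟩ := hx
    obtain ⟨hA', ⟨hna', rfl⟩, hnb', hb'⟩ := hx'
    have h1 : m ∉ a := fun h => hmT (hA (by simpa using h))
    have h2 : m ∉ a' := fun h => hmT (hA' (by simpa using h))
    have h3 : m ∉ b := fun h => by
      rw [← List.mem_toFinset, hb] at h; exact hmT (mem_sdiff.1 h).1
    have h4 : m ∉ b' := fun h => by
      rw [← List.mem_toFinset, hb'] at h; exact hmT (mem_sdiff.1 h).1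
    dsimp only at he
    have := (List.append_cons_inj_of_notMem (by assumption) (by assumption)).1 he
    obtain ⟨rfl, -, rfl⟩ := this
    rfl
  · intro l hl
    rw [mem_arr] at hl
    have : m ∈ l := by rw [← List.mem_toFinset, hl.2]; simp
    obtain ⟨a, b, rfl⟩ := List.append_of_mem this
    obtain ⟨hn, hl⟩ := hl
    rw [List.nodup_append, List.nodup_cons] at hn
    simp only [Finset.ext_iff, List.mem_toFinset, List.mem_append, List.mem_cons,
      mem_insert] at hl
    refine ⟨⟨a.toFinset, a, b⟩, ?_, rfl⟩
    simp only [mem_sigma, mem_powerset, mem_product, mem_arr]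
    refine ⟨?_, ⟨hn.1, by trivial⟩, hn.2.1.2, ?_⟩
    · intro x hx
      have := hl x
      simp only [List.mem_toFinset] at hx
      grind
    · ext x
      have := hl x
      simp only [List.mem_toFinset, mem_sdiff]
      grind
  · rintro ⟨A, a, b⟩ hx
    simp only [mem_sigma, mem_powerset, mem_product, mem_arr] at hx
    obtain ⟨hA, ⟨hna, rfl⟩, hnb, hb⟩ := hx
    have ha : ∀ x ∈ a, m < x := fun x hx => hm x (hA (by simpa using hx))
    have hb'' : ∀ x ∈ b, m < x := fun x hx => by
      rw [← List.mem_toFinset, hb] at hx; exact hm x (mem_sdiff.1 hx).1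
    rw [laid_split a b m ha hb'' hna hnb, ← hb, List.toFinset_card_of_nodup hna,
      List.toFinset_card_of_nodup hnb]
    ring

/-! ### Gaussian binomial coefficients -/

/-- The inversion generating polynomial of the `k`-element subsets of `S` against their
complements: the Gaussian binomial coefficient. -/
noncomputable def G (S : Finset ℕ) (k : ℕ) : ℤ[X] := ∑ A ∈ powersetCard k S, X ^ inv A (S \ A)

lemma G_zero (S : Finset ℕ) : G S 0 = 1 := by
  simp [G, inv]

lemma G_card (S : Finset ℕ) : G S S.card = 1 := by
  simp [G, inv]

/-- The `q`-Pascal rule: `m`, the smallest element, creates no inversion inside the chosen subset,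
and `k + 1` of them inside the complement. -/
lemma G_insert (m : ℕ) (S : Finset ℕ) (hm : ∀ x ∈ S, m < x) (k : ℕ) :
    G (insert m S) (k + 1) = G S k + X ^ (k + 1) * G S (k + 1) := by
  have hmS : m ∉ S := fun h => lt_irrefl _ (hm m h)
  unfold G
  rw [powersetCard_succ_insert hmS, sum_union, add_comm, sum_image, mul_sum]
  · congr 1
    · apply sum_congr rfl
      intro A hA
      rw [mem_powersetCard] at hA
      congr 1
      unfold inv
      congr 1
      ext ⟨x, y⟩
      have := hm y
      have := @hA.1 x
      simp only [mem_filter, mem_product, mem_insert, mem_sdiff]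
      grind
    · apply sum_congr rfl
      intro A hA
      rw [mem_powersetCard] at hA
      have hmA : m ∉ A := fun h => hmS (hA.1 h)
      rw [← pow_add]
      congr 1
      unfold inv
      have : ((A ×ˢ (insert m S \ A)).filter fun x : ℕ × ℕ => x.2 < x.1) =
          (A ×ˢ {m}) ∪ ((A ×ˢ (S \ A)).filter fun x : ℕ × ℕ => x.2 < x.1) := by
        ext ⟨x, y⟩
        have := hm x
        have := @hA.1 x
        simp only [mem_filter, mem_product, mem_insert, mem_sdiff, mem_union, mem_singleton]
        grind
      rw [this, card_union_of_disjoint]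
      · simp [hA.2]
      · rw [disjoint_left]; rintro ⟨x, y⟩
        simp only [mem_filter, mem_product, mem_sdiff, mem_singleton]
        grind
  · intro A hA B hB h
    have hA := (mem_powersetCard.1 (mem_coe.1 hA)).1
    have hB := (mem_powersetCard.1 (mem_coe.1 hB)).1
    have h1 : m ∉ A := fun h => hmS (hA h)
    have h2 : m ∉ B := fun h => hmS (hB h)
    rw [← erase_insert h1, ← erase_insert h2]; exact congrArg (fun s => s.erase m) h
  · rw [disjoint_left]
    intro A hA hA'
    obtain ⟨B, -, rfl⟩ := mem_image.1 hA'
    exact hmS ((mem_powersetCard.1 hA).1 (mem_insert_self _ _))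

lemma qfact_succ (q : ℤ[X]) (n : ℕ) : qfact q (n + 1) = qfact q n * qint q (n + 1) :=
  prod_range_succ _ _

lemma qint_add (q : ℤ[X]) (a b : ℕ) : qint q (a + b) = qint q a + q ^ a * qint q b := by
  simp only [qint, sum_range_add, mul_sum, pow_add]

/-- The factorial formula for the Gaussian binomial coefficients. -/
lemma G_mul (S : Finset ℕ) : ∀ k j, k + j = S.card →
    G S k * (qfact X k * qfact X j) = qfact X S.card := by
  induction S using Finset.induction_on_min with
  | empty =>
    intro k j h
    simp only [card_empty] at h
    obtain ⟨rfl, rfl⟩ : k = 0 ∧ j = 0 := by omega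
    simp [G_zero, qfact]
  | insert m S hm ih =>
    intro k j h
    have hmS : m ∉ S := fun h => lt_irrefl _ (hm m h)
    rcases k with _ | k
    · rw [G_zero, ← h]; simp [qfact]
    rcases j with _ | j
    · rw [add_zero] at h; rw [h, G_card]; simp [qfact]
    rw [card_insert_of_notMem hmS] at *
    have h1 := ih k (j + 1) (by omega)
    have h2 := ih (k + 1) j (by omega)
    rw [G_insert m S hm]
    simp only [qfact_succ] at h1 h2 ⊢
    rw [← h, qint_add X (k + 1) (j + 1)]
    linear_combination qint X (k + 1) * h1 + X ^ (k + 1) * qint X (j + 1) * h2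

/-! ### Evaluation of the generating polynomial -/

/-- The values `corr k (n - k)`, for `0 ≤ k ≤ n`, are `0, 1, …, n` in some order. -/
lemma sum_corr (n : ℕ) :
    ∑ k ∈ range (n + 1), (X : ℤ[X]) ^ corr k (n - k) = qint X (n + 1) := by
  rcases n with _ | n
  · simp [corr, qint]
  rw [sum_range_succ, sum_range_succ', qint, sum_range_succ', sum_range_succ']
  have : ∀ k ∈ range n, (X : ℤ[X]) ^ corr (k + 1) (n + 1 - (k + 1)) = X ^ (k + 1 + 1) := by
    intro k hk
    rw [mem_range] at hk
    simp [corr, hk]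
  rw [sum_congr rfl this]
  simp [corr]
  ring

/-- In the recursion `F_insert`, with `n` the size of `T`, the subsets of size `k` contribute
`q ^ corr k (n - k)` times
`[n]_q!` by the Gaussian binomial formula. -/
theorem F_eq (S : Finset ℕ) : F S = qfact X S.card := by
  induction h : S.card using Nat.strong_induction_on generalizing S with
  | _ n ih =>
  rcases S.eq_empty_or_nonempty with rfl | hS
  · rw [F_empty, ← h]; simp [qfact]
  · set m := S.min' hS
    set T := S.erase m with hT
    have hST : insert m T = S := insert_erase (S.min'_mem hS)
    have hm : ∀ x ∈ T, m < x := fun x hx =>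
      S.min'_lt_of_mem_erase_min' hS hx
    have hc : T.card + 1 = n := by rw [← h]; exact card_erase_add_one (S.min'_mem hS)
    rw [← hST, F_insert m T hm, sum_powerset, ← hc, qfact_succ, ← sum_corr, mul_sum]
    apply sum_congr rfl
    intro k hk
    rw [mem_range] at hk
    rw [← G_mul T k (T.card - k) (by omega), G, sum_mul, sum_mul]
    apply sum_congr rfl
    intro A hA
    rw [mem_powersetCard] at hA
    have hd : (T \ A).card = T.card - k := by rw [card_sdiff_of_subset hA.1, hA.2]
    rw [ih A.card (by omega) A rfl, ih (T \ A).card (by omega) _ rfl, hd, hA.2, pow_add]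
    ring

/-! ### From permutations to words -/

/-- The one-line notation of a permutation, with letters `0, …, n - 1`. -/
def word {n : ℕ} (σ : Equiv.Perm (Fin n)) : List ℕ := List.ofFn fun i => (σ i : ℕ)

lemma word_getD {n : ℕ} (σ : Equiv.Perm (Fin n)) (i : ℕ) (hi : i < n) :
    (word σ).getD i 0 = σ ⟨i, hi⟩ := by
  rw [List.getD_eq_getElem _ _ (by simpa [word] using hi)]; simp [word]

lemma laid_word {n : ℕ} (σ : Equiv.Perm (Fin n)) : laid (word σ) = ai n σ + des n σ := by
  have hl : (word σ).length = n := by simp [word]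
  have hg := word_getD σ
  unfold laid waid ai des
  rw [hl]
  congr 1
  · rw [Set.ncard_eq_toFinset_card']
    symm
    apply card_bij (fun x _ => ((x.1 : ℕ), (x.2 : ℕ)))
    · rintro ⟨i, j⟩ hx
      simp only [Set.mem_toFinset, Set.mem_ofPred_eq] at hx
      simp only [wInv, mem_filter, mem_product, mem_Ico, hg _ i.2, hg _ j.2]
      refine ⟨by omega, hx.1, hx.2.1, ?_⟩
      rcases hx.2.2 with ⟨j', h1, h2⟩ | ⟨k, h1, h2, h3⟩
      · left
        rw [← h1, hg _ j'.2]; exact ⟨j'.2, h2⟩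
      · right
        exact ⟨k, h1, h2, by rw [hg _ k.2]; exact h3⟩
    · rintro ⟨i, j⟩ _ ⟨i', j'⟩ _ h
      simpa [Fin.ext_iff] using h
    · rintro ⟨i, j⟩ hx
      simp only [wInv, mem_filter, mem_product, mem_Ico] at hx
      obtain ⟨⟨⟨-, hi⟩, -, hj⟩, hij, h1, h2⟩ := hx
      refine ⟨(⟨i, hi⟩, ⟨j, hj⟩), ?_, rfl⟩
      rw [hg _ hi, hg _ hj] at h1
      rw [hg _ hj] at h2
      simp only [Set.mem_toFinset, Set.mem_ofPred_eq]
      refine ⟨hij, h1, ?_⟩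
      rcases h2 with ⟨h2, h3⟩ | ⟨k, h2, h3, h4⟩
      · left
        rw [hg _ h2] at h3
        exact ⟨⟨j + 1, h2⟩, rfl, h3⟩
      · right
        rw [hg _ (h3.trans hj)] at h4
        exact ⟨⟨k, h3.trans hj⟩, h2, h3, h4⟩
  · congr 1
    ext i
    simp only [wDes, DesSet, mem_filter, mem_Ico, mem_range]
    constructor
    · rintro ⟨⟨-, h1⟩, h2, h3⟩
      rw [hg _ h1, hg _ h2] at h3
      exact ⟨h1, h1, h2, h3⟩
    · rintro ⟨-, h1, h2, h3⟩
      rw [hg _ h1, hg _ h2]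
      exact ⟨⟨by omega, h1⟩, h2, h3⟩

lemma sum_word (n : ℕ) :
    ∑ σ : Equiv.Perm (Fin n), (X : ℤ[X]) ^ laid (word σ) = F (range n) := by
  unfold F
  apply sum_bij (fun σ _ => word σ)
  · intro σ _
    rw [mem_arr]
    constructor
    · exact List.nodup_ofFn.2 fun i j h => σ.injective (Fin.ext h)
    · ext x
      simp only [word, List.mem_toFinset, List.mem_ofFn, mem_range]
      constructor
      · rintro ⟨i, rfl⟩; exact (σ i).2
      · intro hx; exact ⟨σ.symm ⟨x, hx⟩, by simp⟩
  · intro σ _ τ _ h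
    have := List.ofFn_injective h
    ext i
    exact congrFun this i
  · intro l hl
    rw [mem_arr] at hl
    obtain ⟨hn, hl⟩ := hl
    have hlen : l.length = n := by
      rw [← List.toFinset_card_of_nodup hn, hl, card_range]
    subst hlen
    have hlt : ∀ i : Fin l.length, l[i] < l.length := fun i => by
      rw [← mem_range, ← hl, List.mem_toFinset]; exact List.getElem_mem _
    let g : Fin l.length → Fin l.length := fun i => ⟨l[i], hlt i⟩
    have hg : Function.Injective g := fun i j h => by
      have := congrArg Fin.val h
      exact Fin.ext (hn.getElem_inj_iff.1 this)
    refine ⟨Equiv.ofBijective g (Finite.injective_iff_bijective.1 hg), mem_univ _, ?_⟩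
    exact List.ofFn_getElem
  · intro _ _; rfl

end Aid

/-- `aid = ai + des` is Mahonian:
`Σ_{σ ∈ S_n} q^{ai σ + des σ} = [n]_q!`. -/
theorem aid_is_mahonian (n : ℕ) :
    (∑ σ : Equiv.Perm (Fin n), (Polynomial.X : Polynomial ℤ) ^ (ai n σ + des n σ)) =
      qfact (Polynomial.X : Polynomial ℤ) n := by
  simp_rw [← Aid.laid_word]
  rw [Aid.sum_word, Aid.F_eq, Finset.card_range]
end

section
/- Let F_n(q) = Σ_{σ∈S_n} q^{aid(σ)}, where aid(σ) = ai(σ) + des(σ). Then for all n ≥ 2, F_n(q) = (1+q)F_{n−1}(q) + Σ_{j=2}^{n−1} [n−1 choose j−1]_q · q^j · F_{j−1}(q) · F_{n−j}(q), where the j-th term in the sum q-counts permutations with σ(j) = 1 (first/last position giving the (1+q)F_{n−1} terms). -/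
/-!
Classify the permutations by the position of their least letter. If a word is `u m v` with `m` its
strict minimum, `|u| = a` and `|v| = b`, then

* descents of the word are those of `u` and of `v`, plus one into `m` if `u` is nonempty
  (`desW_split`);
* the admissible inversions inside `u` and inside `v` are those of `u` and `v` as separate words:
  the last letter of `u` is followed by a descent, just as if nothing followed it. Every inversion
  between `u` and `v` is admissible, since `m` lies in between, and the `a` inversions ending at `m`
  are admissible exactly when `m` is followed by a letter (`aiW_split`).

So `aid (u m v) = aid u + aid v + inv(u, v) + (a + 1)` when both factors are nonempty, and `inv(u, v)`
depends only on the set `S` of letters of `u`. A permutation with least letter at position `a` is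
the same thing as a triple of an `a`-subset `S` of the other `a + b` letters, an order on `S`, and an
order on its complement (`insMin`, `glue_bijective`). Summing over the orders gives
`Faid a * Faid b`; summing `X ^ inv` over the sets `S` gives the Gaussian binomial
(`sum_powersetCard_invS`, by the q-Pascal rule).
-/

open scoped Classical

/-- `aid = ai + des`. -/
noncomputable def aid (n : ℕ) (σ : Equiv.Perm (Fin n)) : ℕ := ai n σ + des n σ

/-- `F_n(q) = Σ_{σ ∈ S_n} q^{aid σ}`, with `q = X`. -/
noncomputable def Faid (m : ℕ) : Polynomial ℤ :=
  ∑ σ : Equiv.Perm (Fin m), Polynomial.X ^ aid m σ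

/-! ### Words and their decomposition at the minimum -/

/-- The number of descents of the word `f 0, …, f (n - 1)`. -/
def desW (n : ℕ) (f : ℕ → ℕ) : ℕ :=
  ∑ i ∈ Finset.range n, if i + 1 < n ∧ f (i + 1) < f i then 1 else 0

/-- The pair of positions `(i, j)` is an admissible inversion of the word `f 0, …, f (n - 1)`. -/
def AdmInv (n : ℕ) (f : ℕ → ℕ) (i j : ℕ) : Prop :=
  i < j ∧ f j < f i ∧ ((j + 1 < n ∧ f j < f (j + 1)) ∨ ∃ k, i < k ∧ k < j ∧ f k < f j)

/-- The number of admissible inversions of the word `f 0, …, f (n - 1)`. -/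
noncomputable def aiW (n : ℕ) (f : ℕ → ℕ) : ℕ :=
  ∑ i ∈ Finset.range n, ∑ j ∈ Finset.range n, if AdmInv n f i j then 1 else 0

/-- The statistic `aid = ai + des` of the word `f 0, …, f (n - 1)`. -/
noncomputable def aidW (n : ℕ) (f : ℕ → ℕ) : ℕ := aiW n f + desW n f

/-- The one-line word of a permutation, extended by the irrelevant value `0` beyond position
`n - 1`. -/
def wd {n : ℕ} (σ : Equiv.Perm (Fin n)) (i : ℕ) : ℕ := if h : i < n then (σ ⟨i, h⟩ : ℕ) else 0

lemma wd_fin {n : ℕ} (σ : Equiv.Perm (Fin n)) (i : Fin n) : wd σ i = σ i := by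
  simp [wd]

lemma des_eq_desW (n : ℕ) (σ : Equiv.Perm (Fin n)) : des n σ = desW n (wd σ) := by
  unfold des DesSet desW
  rw [Finset.card_filter]
  refine Finset.sum_congr rfl fun i hi => ?_
  have hi' := Finset.mem_range.1 hi
  refine if_congr ?_ rfl rfl
  constructor
  · rintro ⟨h1, h2, h⟩
    exact ⟨h2, by simpa [wd, h1, h2] using h⟩
  · rintro ⟨h2, h⟩
    exact ⟨hi', h2, by simpa [wd, hi', h2] using h⟩

lemma admInv_wd_iff {n : ℕ} (σ : Equiv.Perm (Fin n)) (i j : Fin n) :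
    AdmInv n (wd σ) i j ↔ i < j ∧ σ j < σ i ∧
      ((∃ j' : Fin n, (j' : ℕ) = (j : ℕ) + 1 ∧ σ j < σ j') ∨
        ∃ k : Fin n, i < k ∧ k < j ∧ σ k < σ j) := by
  unfold AdmInv
  rw [wd_fin, wd_fin]
  refine and_congr Iff.rfl (and_congr Iff.rfl (or_congr ?_ ?_))
  · constructor
    · rintro ⟨h1, h⟩
      exact ⟨⟨j + 1, h1⟩, rfl, by simpa [wd, h1] using h⟩
    · rintro ⟨j', h1, h⟩
      rw [← h1, wd_fin]
      exact ⟨j'.2, h⟩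
  · constructor
    · rintro ⟨k, h1, h2, h⟩
      have hk : k < n := h2.trans j.2
      exact ⟨⟨k, hk⟩, h1, h2, by simpa [wd, hk] using h⟩
    · rintro ⟨k, h1, h2, h⟩
      exact ⟨k, h1, h2, by rw [wd_fin]; exact h⟩

lemma ai_eq_aiW (n : ℕ) (σ : Equiv.Perm (Fin n)) : ai n σ = aiW n (wd σ) := by
  unfold ai aiW
  rw [Set.ncard_eq_toFinset_card', Finset.sum_range]
  simp_rw [Finset.sum_range]
  rw [← Fintype.sum_prod_type' (f := fun i j : Fin n => if AdmInv n (wd σ) i j then 1 else 0),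
    ← Finset.card_filter]
  congr 1
  ext ⟨i, j⟩
  simp [admInv_wd_iff]

lemma aid_eq_aidW (n : ℕ) (σ : Equiv.Perm (Fin n)) : aid n σ = aidW n (wd σ) := by
  rw [aid, aidW, ai_eq_aiW, des_eq_desW]

/-- `aidW` depends only on the relative order of the letters. -/
lemma aidW_congr {n : ℕ} {f g : ℕ → ℕ} (h : ∀ i < n, ∀ j < n, (f i < f j ↔ g i < g j)) :
    aidW n f = aidW n g := by
  unfold aidW aiW desW
  congr 1
  · refine Finset.sum_congr rfl fun i hi => Finset.sum_congr rfl fun j hj => ?_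
    rw [Finset.mem_range] at hi hj
    refine if_congr ?_ rfl rfl
    unfold AdmInv
    refine and_congr Iff.rfl (and_congr (h _ hj _ hi) (or_congr ?_ ?_))
    · exact and_congr_right fun h1 => h _ hj _ h1
    · exact exists_congr fun k => and_congr_right fun _ => and_congr_right fun h2 =>
        h _ (h2.trans hj) _ hj
  · refine Finset.sum_congr rfl fun i hi => ?_
    rw [Finset.mem_range] at hi
    exact if_congr (and_congr_right fun h1 => h _ h1 _ hi) rfl rfl

/-- Descents of a word whose strict minimum is at position `a`: those of the two factors around
the minimum, plus the descent into the minimum when the left factor is nonempty. -/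
lemma desW_split (a b : ℕ) (f : ℕ → ℕ) (hf : ∀ i < a + 1 + b, i ≠ a → f a < f i) :
    desW (a + 1 + b) f =
      desW a f + desW b (fun i => f (a + 1 + i)) + (if a = 0 then 0 else 1) := by
  have hR : ∀ i ∈ Finset.range b, (if a + 1 + i + 1 < a + 1 + b ∧ f (a + 1 + i + 1) < f (a + 1 + i)
      then 1 else 0) = if i + 1 < b ∧ f (a + 1 + (i + 1)) < f (a + 1 + i) then 1 else 0 := by
    intro i _
    refine if_congr ?_ rfl rfl
    rw [← add_assoc]
    exact and_congr_left fun _ => by omega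
  have hM : ¬ (a + 1 < a + 1 + b ∧ f (a + 1) < f a) := by
    rintro ⟨h1, h2⟩
    have := hf (a + 1) h1 (by omega)
    omega
  unfold desW
  rw [Finset.sum_range_add, Finset.sum_congr rfl hR, Finset.sum_range_succ, if_neg hM]
  rcases a with _ | a
  · simp
  · have hL : ∀ i ∈ Finset.range a, (if i + 1 < a + 1 + 1 + b ∧ f (i + 1) < f i then 1 else 0) =
        if i + 1 < a + 1 ∧ f (i + 1) < f i then 1 else 0 := by
      intro i hi
      rw [Finset.mem_range] at hi
      exact if_congr (and_congr_left fun _ => by omega) rfl rfl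
    rw [Finset.sum_range_succ, Finset.sum_range_succ, Finset.sum_congr rfl hL,
      if_pos ⟨by omega, hf a (by omega) (by omega)⟩]
    simp
    omega

/-- Admissible inversions of a word whose strict minimum is at position `a`: those of the two
factors, all inversions straddling the minimum (which is a smaller letter in between), and, when
the minimum is not the last letter, the `a` inversions ending at it. -/
lemma aiW_split (a b : ℕ) (f : ℕ → ℕ) (hf : ∀ i < a + 1 + b, i ≠ a → f a < f i) :
    aiW (a + 1 + b) f =
      aiW a f + aiW b (fun i => f (a + 1 + i)) +
        (∑ i ∈ Finset.range a, ∑ k ∈ Finset.range b, if f (a + 1 + k) < f i then 1 else 0) +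
        (if b = 0 then 0 else a) := by
  have hLL : ∀ i ∈ Finset.range a, ∀ j ∈ Finset.range a,
      (if AdmInv (a + 1 + b) f i j then 1 else 0) = if AdmInv a f i j then 1 else 0 := by
    intro i hi j hj
    rw [Finset.mem_range] at hi hj
    refine if_congr ?_ rfl rfl
    unfold AdmInv
    refine and_congr_right fun _ => and_congr_right fun _ => or_congr ?_ Iff.rfl
    constructor
    · rintro ⟨h1, h2⟩
      refine ⟨?_, h2⟩
      -- the last letter of the left factor is followed by the minimum, hence by a smaller letter
      by_contra hcon
      have : j + 1 = a := by omega
      rw [this] at h2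
      have := hf j (by omega) (by omega)
      omega
    · rintro ⟨h1, h2⟩
      exact ⟨by omega, h2⟩
  have hLM : ∀ i ∈ Finset.range a, (if AdmInv (a + 1 + b) f i a then 1 else 0) =
      if b = 0 then 0 else 1 := by
    intro i hi
    rw [Finset.mem_range] at hi
    have hmin : ¬ ∃ k, i < k ∧ k < a ∧ f k < f a := by
      rintro ⟨k, h1, h2, h3⟩
      have := hf k (by omega) (by omega)
      omega
    unfold AdmInv
    by_cases hb : b = 0
    · simp [hb, hmin]
    · rw [if_pos, if_neg hb]
      exact ⟨hi, hf i (by omega) (by omega), Or.inl ⟨by omega, hf _ (by omega) (by omega)⟩⟩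
  have hLR : ∀ i ∈ Finset.range a, ∀ k ∈ Finset.range b,
      (if AdmInv (a + 1 + b) f i (a + 1 + k) then 1 else 0) =
        if f (a + 1 + k) < f i then 1 else 0 := by
    intro i hi k hk
    rw [Finset.mem_range] at hi hk
    refine if_congr ?_ rfl rfl
    unfold AdmInv
    exact ⟨fun h => h.2.1, fun h => ⟨by omega, h, Or.inr ⟨a, hi, by omega,
      hf _ (by omega) (by omega)⟩⟩⟩
  have hM : ∀ j ∈ Finset.range (a + 1 + b), (if AdmInv (a + 1 + b) f a j then 1 else 0) = 0 := by
    intro j hj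
    rw [Finset.mem_range] at hj
    refine if_neg fun h => ?_
    have := hf j hj (by have := h.1; omega)
    have := h.2.1
    omega
  have hRL : ∀ i ∈ Finset.range b, ∀ j ∈ Finset.range (a + 1),
      (if AdmInv (a + 1 + b) f (a + 1 + i) j then 1 else 0) = 0 := by
    intro i _ j hj
    rw [Finset.mem_range] at hj
    exact if_neg fun h => by have := h.1; omega
  have hRR : ∀ i ∈ Finset.range b, ∀ j ∈ Finset.range b,
      (if AdmInv (a + 1 + b) f (a + 1 + i) (a + 1 + j) then 1 else 0) =
        if AdmInv b (fun i => f (a + 1 + i)) i j then 1 else 0 := by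
    intro i _ j _
    refine if_congr ?_ rfl rfl
    unfold AdmInv
    refine and_congr (by omega) (and_congr_right fun _ => or_congr ?_ ?_)
    · beta_reduce
      rw [← add_assoc]
      exact and_congr_left fun _ => by omega
    · beta_reduce
      constructor
      · rintro ⟨k, h1, h2, h3⟩
        refine ⟨k - (a + 1), by omega, by omega, ?_⟩
        rwa [show a + 1 + (k - (a + 1)) = k by omega]
      · rintro ⟨k, h1, h2, h3⟩
        exact ⟨a + 1 + k, by omega, by omega, h3⟩
  have hrow : ∀ i ∈ Finset.range a,
      ∑ j ∈ Finset.range (a + 1 + b), (if AdmInv (a + 1 + b) f i j then 1 else 0) =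
        (∑ j ∈ Finset.range a, if AdmInv a f i j then 1 else 0) + (if b = 0 then 0 else 1) +
          ∑ k ∈ Finset.range b, if f (a + 1 + k) < f i then 1 else 0 := by
    intro i hi
    rw [Finset.sum_range_add, Finset.sum_range_succ, Finset.sum_congr rfl (hLL i hi), hLM i hi,
      Finset.sum_congr rfl (hLR i hi)]
  have hrow' : ∀ i ∈ Finset.range b,
      ∑ j ∈ Finset.range (a + 1 + b), (if AdmInv (a + 1 + b) f (a + 1 + i) j then 1 else 0) =
        ∑ j ∈ Finset.range b, if AdmInv b (fun i => f (a + 1 + i)) i j then 1 else 0 := by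
    intro i hi
    rw [Finset.sum_range_add, Finset.sum_eq_zero (hRL i hi), zero_add,
      Finset.sum_congr rfl (hRR i hi)]
  unfold aiW
  rw [Finset.sum_range_add, Finset.sum_range_succ, Finset.sum_eq_zero hM,
    Finset.sum_congr rfl hrow, Finset.sum_congr rfl hrow', Finset.sum_add_distrib,
    Finset.sum_add_distrib]
  have : (∑ i ∈ Finset.range a, if b = 0 then 0 else 1) = if b = 0 then 0 else a := by
    split_ifs <;> simp
  rw [this]
  ring

/-! ### Gaussian binomials as inversion counts over subsets -/

lemma qbinom_eq_zero {R : Type*} [CommSemiring R] (q : R) {n k : ℕ} (h : n < k) :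
    qbinom q n k = 0 := by
  induction n generalizing k with
  | zero => rcases k with _ | k <;> simp_all [qbinom]
  | succ n ih =>
    rcases k with _ | k
    · omega
    · rw [qbinom, ih (by omega), ih (by omega)]; simp

lemma qbinom_zero_right {R : Type*} [CommSemiring R] (q : R) (n : ℕ) : qbinom q n 0 = 1 := by
  rcases n with _ | n <;> rfl

lemma qbinom_self {R : Type*} [CommSemiring R] (q : R) (n : ℕ) : qbinom q n n = 1 := by
  induction n with
  | zero => rfl
  | succ n ih => rw [qbinom, ih, qbinom_eq_zero q (Nat.lt_succ_self n)]; simp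

/-- The number of pairs `(x, y) ∈ S × T` with `y < x`. -/
def invS {α : Type*} [LinearOrder α] (S T : Finset α) : ℕ :=
  ∑ x ∈ S, ∑ y ∈ T, if y < x then 1 else 0

/-- The Gaussian binomial q-counts the `k`-subsets `S` of `T` by the pairs in `S × (T \ S)` with
first entry larger. Removing the least element of `T` gives the q-Pascal recurrence. -/
lemma sum_powersetCard_invS {R : Type*} [CommSemiring R] (q : R) {α : Type*} [LinearOrder α]
    (T : Finset α) (k : ℕ) :
    ∑ S ∈ Finset.powersetCard k T, q ^ invS S (T \ S) = qbinom q T.card k := by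
  induction T using Finset.induction_on_min generalizing k with
  | empty =>
    rcases k with _ | k
    · simp [qbinom, invS]
    · rw [Finset.powersetCard_eq_empty.2 (by simp)]
      simp [qbinom]
  | insert m T hm ih =>
    have hmT : m ∉ T := fun h => lt_irrefl _ (hm m h)
    rcases k with _ | k
    · simp [qbinom_zero_right, invS]
    · rw [Finset.powersetCard_succ_insert hmT, Finset.sum_union, Finset.sum_image,
        Finset.card_insert_of_notMem hmT, qbinom, ← ih, ← ih, add_comm, Finset.mul_sum]
      · congr 1
        · refine Finset.sum_congr rfl fun S hS => ?_
          have hST := (Finset.mem_powersetCard.1 hS).1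
          have hmS : m ∉ S := fun h => hmT (hST h)
          have h1 : insert m T \ insert m S = T \ S := by
            ext x; simp only [Finset.mem_sdiff, Finset.mem_insert]; grind
          rw [h1]
          congr 1
          unfold invS
          rw [Finset.sum_insert hmS, Finset.sum_eq_zero, zero_add]
          intro y hy
          exact if_neg (hm y (Finset.mem_sdiff.1 hy).1).not_gt
        · refine Finset.sum_congr rfl fun S hS => ?_
          obtain ⟨hST, hc⟩ := Finset.mem_powersetCard.1 hS
          have hmS : m ∉ S := fun h => hmT (hST h)
          rw [← pow_add, Finset.insert_sdiff_of_notMem _ hmS]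
          congr 1
          unfold invS
          have h1 : m ∉ T \ S := fun h => hmT (Finset.mem_sdiff.1 h).1
          simp_rw [Finset.sum_insert h1]
          rw [Finset.sum_add_distrib, ← hc, Finset.card_eq_sum_ones]
          congr 1
          exact Finset.sum_congr rfl fun x hx => if_pos (hm x (hST hx))
      · intro S hS S' hS' h
        have h1 : m ∉ S := fun h => hmT ((Finset.mem_powersetCard.1 hS).1 h)
        have h2 : m ∉ S' := fun h => hmT ((Finset.mem_powersetCard.1 hS').1 h)
        rw [← Finset.erase_insert h1, ← Finset.erase_insert h2, h]
      · rw [Finset.disjoint_left]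
        intro S hS hS'
        obtain ⟨S', _, rfl⟩ := Finset.mem_image.1 hS'
        exact hmT ((Finset.mem_powersetCard.1 hS).1 (Finset.mem_insert_self _ _))

/-! ### Permutations with the least letter at a given position -/

/-- The permutation of `Fin (N + 1)` whose word is that of `ρ`, raised by one, with the letter `0`
inserted at position `p`. -/
def insMin {N : ℕ} (p : Fin (N + 1)) (ρ : Equiv.Perm (Fin N)) : Equiv.Perm (Fin (N + 1)) :=
  (finSuccEquiv' p).trans ((Equiv.optionCongr ρ).trans (finSuccEquiv' 0).symm)

lemma insMin_self {N : ℕ} (p : Fin (N + 1)) (ρ : Equiv.Perm (Fin N)) : insMin p ρ p = 0 := by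
  simp [insMin]

lemma insMin_succAbove {N : ℕ} (p : Fin (N + 1)) (ρ : Equiv.Perm (Fin N)) (x : Fin N) :
    insMin p ρ (p.succAbove x) = (ρ x).succ := by
  simp [insMin]

lemma insMin_injective {N : ℕ} (p : Fin (N + 1)) : Function.Injective (insMin p) := by
  intro ρ ρ' h
  ext x
  have := congrArg (fun σ => σ (p.succAbove x)) h
  simp only [insMin_succAbove, Fin.succ_inj] at this
  rw [this]

lemma exists_insMin_eq {N : ℕ} (p : Fin (N + 1)) (σ : Equiv.Perm (Fin (N + 1))) (h : σ p = 0) :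
    ∃ ρ, insMin p ρ = σ := by
  have hne : ∀ x, σ (p.succAbove x) ≠ 0 := fun x hx =>
    Fin.succAbove_ne p x (σ.injective (hx.trans h.symm))
  let g : Fin N → Fin N := fun x => (σ (p.succAbove x)).pred (hne x)
  have hg : Function.Injective g := fun x y hxy =>
    Fin.succAbove_right_injective (σ.injective (Fin.pred_inj.1 hxy))
  refine ⟨Equiv.ofBijective g (Finite.injective_iff_bijective.1 hg), ?_⟩
  refine Equiv.ext fun i => ?_
  rcases Fin.eq_self_or_eq_succAbove p i with rfl | ⟨x, rfl⟩
  · rw [insMin_self, h]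
  · rw [insMin_succAbove]; simp [g]

lemma sum_filter_eq_sum_insMin {M : Type*} [AddCommMonoid M] {N : ℕ} (p : Fin (N + 1))
    (g : Equiv.Perm (Fin (N + 1)) → M) :
    ∑ σ ∈ Finset.univ.filter (fun σ : Equiv.Perm (Fin (N + 1)) => σ p = 0), g σ =
      ∑ ρ, g (insMin p ρ) := by
  symm
  refine Finset.sum_bij (fun ρ _ => insMin p ρ) ?_ ?_ ?_ ?_
  · intro ρ _; simp [insMin_self]
  · intro ρ _ ρ' _ h; exact insMin_injective p h
  · intro σ hσ
    obtain ⟨ρ, hρ⟩ := exists_insMin_eq p σ (Finset.mem_filter.1 hσ).2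
    exact ⟨ρ, Finset.mem_univ _, hρ⟩
  · intros; rfl

lemma card_compl_of_card {a b : ℕ} {S : Finset (Fin (a + b))} (h : S.card = a) :
    Sᶜ.card = b := by
  rw [Finset.card_compl, h, Fintype.card_fin]; omega

/-- The permutation whose first `a` letters are the elements of `S` in the relative order `π`, and
whose last `b` letters are the other elements in the relative order `τ`. -/
def glue {a b : ℕ} (S : {S : Finset (Fin (a + b)) // S.card = a}) (π : Equiv.Perm (Fin a))
    (τ : Equiv.Perm (Fin b)) : Equiv.Perm (Fin (a + b)) :=
  finSumFinEquiv.symm.trans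
    ((Equiv.sumCongr π τ).trans (finSumEquivOfFinset S.2 (card_compl_of_card S.2)))

lemma glue_castAdd {a b : ℕ} (S : {S : Finset (Fin (a + b)) // S.card = a})
    (π : Equiv.Perm (Fin a)) (τ : Equiv.Perm (Fin b)) (i : Fin a) :
    glue S π τ (Fin.castAdd b i) = S.1.orderEmbOfFin S.2 (π i) := by
  simp [glue]

lemma glue_natAdd {a b : ℕ} (S : {S : Finset (Fin (a + b)) // S.card = a})
    (π : Equiv.Perm (Fin a)) (τ : Equiv.Perm (Fin b)) (i : Fin b) :
    glue S π τ (Fin.natAdd a i) = S.1ᶜ.orderEmbOfFin (card_compl_of_card S.2) (τ i) := by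
  simp [glue]

lemma image_glue_castAdd {a b : ℕ} (S : {S : Finset (Fin (a + b)) // S.card = a})
    (π : Equiv.Perm (Fin a)) (τ : Equiv.Perm (Fin b)) :
    Finset.univ.image (fun i : Fin a => glue S π τ (Fin.castAdd b i)) = S.1 := by
  refine Finset.eq_of_subset_of_card_le ?_ ?_
  · intro x hx
    obtain ⟨i, _, rfl⟩ := Finset.mem_image.1 hx
    rw [glue_castAdd]
    exact Finset.orderEmbOfFin_mem _ _ _
  · rw [Finset.card_image_of_injective, S.2, Finset.card_univ, Fintype.card_fin]
    exact (glue S π τ).injective.comp (Fin.castAdd_injective a b)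

lemma glue_bijective (a b : ℕ) : Function.Bijective
    (fun x : {S : Finset (Fin (a + b)) // S.card = a} × (Equiv.Perm (Fin a) × Equiv.Perm (Fin b)) =>
      glue x.1 x.2.1 x.2.2) := by
  constructor
  · rintro ⟨S, π, τ⟩ ⟨S', π', τ'⟩ h
    simp only at h
    have hS : S = S' := by
      apply Subtype.ext
      rw [← image_glue_castAdd S π τ, h, image_glue_castAdd]
    subst hS
    have h1 : π = π' := by
      refine Equiv.ext fun i => (S.1.orderEmbOfFin S.2).injective ?_
      rw [← glue_castAdd S π τ, h, glue_castAdd]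
    have h2 : τ = τ' := by
      refine Equiv.ext fun i => (S.1ᶜ.orderEmbOfFin (card_compl_of_card S.2)).injective ?_
      rw [← glue_natAdd S π τ, h, glue_natAdd]
    rw [h1, h2]
  · intro ρ
    let S : Finset (Fin (a + b)) := Finset.univ.image (fun i : Fin a => ρ (Fin.castAdd b i))
    have hS : S.card = a := by
      rw [Finset.card_image_of_injective, Finset.card_univ, Fintype.card_fin]
      exact ρ.injective.comp (Fin.castAdd_injective a b)
    let e := finSumEquivOfFinset hS (card_compl_of_card hS)
    have hmem : finSumFinEquiv.trans (ρ.trans e.symm) ∈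
        (Equiv.Perm.sumCongrHom (Fin a) (Fin b)).range := by
      apply Equiv.Perm.mem_sumCongrHom_range_of_perm_mapsTo_inl
      rintro _ ⟨i, rfl⟩
      have h1 : ρ (Fin.castAdd b i) ∈ S := Finset.mem_image_of_mem _ (Finset.mem_univ i)
      have h2 : ρ (Fin.castAdd b i) ∈ Set.range (S.orderEmbOfFin hS) := by
        rw [Finset.range_orderEmbOfFin]; exact h1
      obtain ⟨k, hk⟩ := h2
      refine ⟨k, ?_⟩
      simp [← hk, Equiv.eq_symm_apply, e]
    obtain ⟨⟨π, τ⟩, h⟩ := hmem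
    refine ⟨⟨⟨S, hS⟩, π, τ⟩, ?_⟩
    have h' : Equiv.sumCongr π τ = finSumFinEquiv.trans (ρ.trans e.symm) := h
    refine Equiv.ext fun x => ?_
    simp [glue, h', e]

/-- Inversions between the two factors depend only on the letter set of the first one. -/
lemma sum_invS_eq {a b : ℕ} (S : {S : Finset (Fin (a + b)) // S.card = a})
    (π : Equiv.Perm (Fin a)) (τ : Equiv.Perm (Fin b)) :
    (∑ i : Fin a, ∑ k : Fin b,
      if glue S π τ (Fin.natAdd a k) < glue S π τ (Fin.castAdd b i) then 1 else 0) =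
      invS S.1 (Finset.univ \ S.1) := by
  simp_rw [glue_castAdd, glue_natAdd]
  unfold invS
  rw [← Finset.compl_eq_univ_sdiff]
  have key : ∀ {m : ℕ} (T : Finset (Fin (a + b))) (hT : T.card = m) (ρ : Equiv.Perm (Fin m))
      (g : Fin (a + b) → ℕ), ∑ i, g (T.orderEmbOfFin hT (ρ i)) = ∑ x ∈ T, g x := by
    intro m T hT ρ g
    rw [Equiv.sum_comp ρ (fun i => g (T.orderEmbOfFin hT i))]
    conv_rhs => rw [← Finset.map_orderEmbOfFin_univ T hT]
    rw [Finset.sum_map]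
    rfl
  rw [← key S.1 S.2 π]
  exact Finset.sum_congr rfl fun i _ => key S.1ᶜ (card_compl_of_card S.2) τ
    fun y => if y < S.1.orderEmbOfFin S.2 (π i) then 1 else 0

/-- With the least letter at position `a`, `aid` is the sum of `aid` over the two factors, the
number of inversions between them, and a term depending only on `a` and `b`. -/
lemma aid_insMin_glue {a b : ℕ} (p : Fin (a + b + 1)) (hp : (p : ℕ) = a)
    (S : {S : Finset (Fin (a + b)) // S.card = a})
    (π : Equiv.Perm (Fin a)) (τ : Equiv.Perm (Fin b)) :
    aid (a + b + 1) (insMin p (glue S π τ)) =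
      aid a π + aid b τ + invS S.1 (Finset.univ \ S.1) +
        ((if a = 0 then 0 else 1) + (if b = 0 then 0 else a)) := by
  set ρ := glue S π τ with hρ
  set f := wd (insMin p ρ) with hf
  have hfp : f a = 0 := by
    rw [← hp, hf, wd_fin, insMin_self]; rfl
  have hL : ∀ i : Fin a, f i = ρ (Fin.castAdd b i) + 1 := by
    intro i
    have h1 : (p.succAbove (Fin.castAdd b i) : ℕ) = i := by
      rw [Fin.succAbove_of_castSucc_lt _ _ (by rw [Fin.lt_def]; simp [hp])]
      simp
    rw [← h1, hf, wd_fin, insMin_succAbove]; simp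
  have hR : ∀ k : Fin b, f (a + 1 + k) = ρ (Fin.natAdd a k) + 1 := by
    intro k
    have h1 : (p.succAbove (Fin.natAdd a k) : ℕ) = a + 1 + k := by
      rw [Fin.succAbove_of_le_castSucc _ _ (by rw [Fin.le_def]; simp [hp])]
      simp; omega
    rw [← h1, hf, wd_fin, insMin_succAbove]; simp
  have hmin : ∀ i < a + 1 + b, i ≠ a → f a < f i := by
    intro i hi hne
    rw [hfp]
    rcases lt_or_gt_of_ne hne with h | h
    · have := hL ⟨i, h⟩
      simp only at this
      omega
    · have := hR ⟨i - (a + 1), by omega⟩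
      simp only at this
      rw [show a + 1 + (i - (a + 1)) = i by omega] at this
      omega
  have h1 : aidW a f = aid a π := by
    rw [aid_eq_aidW]
    refine aidW_congr fun i hi j hj => ?_
    have e1 := hL ⟨i, hi⟩
    have e2 := hL ⟨j, hj⟩
    have e3 := wd_fin π ⟨i, hi⟩
    have e4 := wd_fin π ⟨j, hj⟩
    simp only at e1 e2 e3 e4
    rw [e1, e2, e3, e4, Nat.add_lt_add_iff_right, Fin.val_fin_lt, Fin.val_fin_lt, hρ, glue_castAdd,
      glue_castAdd, OrderEmbedding.lt_iff_lt]
  have h2 : aidW b (fun i => f (a + 1 + i)) = aid b τ := by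
    rw [aid_eq_aidW]
    refine aidW_congr fun i hi j hj => ?_
    have e1 := hR ⟨i, hi⟩
    have e2 := hR ⟨j, hj⟩
    have e3 := wd_fin τ ⟨i, hi⟩
    have e4 := wd_fin τ ⟨j, hj⟩
    simp only at e1 e2 e3 e4
    rw [e1, e2, e3, e4, Nat.add_lt_add_iff_right, Fin.val_fin_lt, Fin.val_fin_lt, hρ, glue_natAdd,
      glue_natAdd, OrderEmbedding.lt_iff_lt]
  have h3 : (∑ i ∈ Finset.range a, ∑ k ∈ Finset.range b, if f (a + 1 + k) < f i then 1 else 0) =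
      invS S.1 (Finset.univ \ S.1) := by
    rw [← sum_invS_eq S π τ, Finset.sum_range]
    refine Finset.sum_congr rfl fun i _ => ?_
    rw [Finset.sum_range]
    refine Finset.sum_congr rfl fun k _ => ?_
    rw [hL, hR]
    exact if_congr (by rw [Nat.add_lt_add_iff_right, Fin.val_fin_lt]) rfl rfl
  rw [aid_eq_aidW, ← hf, ← h1, ← h2, ← h3, show a + b + 1 = a + 1 + b by omega]
  unfold aidW
  rw [aiW_split a b f hmin, desW_split a b f hmin]
  ring

/-- The q-count of the permutations with least letter at position `a` (counted from `0`), for every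
`a`. The exponent of `X` records the contribution of the least letter itself: the descent into it,
and the admissible inversions ending at it. -/
lemma sum_filter_aid (n a b : ℕ) (hn : n = a + b + 1) (p z : Fin n) (hp : (p : ℕ) = a)
    (hz : (z : ℕ) = 0) :
    ∑ σ ∈ (Finset.univ : Finset (Equiv.Perm (Fin n))).filter (fun σ => σ p = z),
        (Polynomial.X : Polynomial ℤ) ^ aid n σ =
      qbinom (Polynomial.X : Polynomial ℤ) (a + b) a *
        Polynomial.X ^ ((if a = 0 then 0 else 1) + (if b = 0 then 0 else a)) *
          Faid a * Faid b := by
  subst hn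
  obtain rfl : z = 0 := Fin.ext hz
  rw [sum_filter_eq_sum_insMin p (fun σ => (Polynomial.X : Polynomial ℤ) ^ aid _ σ),
    ← (glue_bijective a b).sum_comp]
  simp_rw [aid_insMin_glue p hp, Fintype.sum_prod_type]
  have hq := sum_powersetCard_invS (Polynomial.X : Polynomial ℤ) (Finset.univ : Finset (Fin (a + b))) a
  rw [Finset.card_univ, Fintype.card_fin, Finset.sum_subtype (p := fun S => S.card = a) _
    (by simp [Finset.mem_powersetCard])] at hq
  rw [← hq, Faid, Faid]
  simp_rw [pow_add, Finset.sum_mul, Finset.mul_sum, Finset.sum_mul]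
  refine Finset.sum_congr rfl fun S _ => ?_
  rw [Finset.sum_comm]
  refine Finset.sum_congr rfl fun τ _ => Finset.sum_congr rfl fun π _ => ?_
  ring

lemma Faid_zero : Faid 0 = 1 := by
  simp [Faid, aid_eq_aidW, aidW, aiW, desW]

/-! ### The recurrence -/

theorem aid_recurrence (n : ℕ) (hn : 2 ≤ n) :
    (Faid n = (1 + Polynomial.X) * Faid (n - 1) +
        ∑ j ∈ Finset.Icc 2 (n - 1),
          qbinom (Polynomial.X : Polynomial ℤ) (n - 1) (j - 1) * Polynomial.X ^ j *
            Faid (j - 1) * Faid (n - j))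
    ∧ (∀ j (h2 : 2 ≤ j) (h3 : j ≤ n - 1),
        (∑ σ ∈ (Finset.univ : Finset (Equiv.Perm (Fin n))).filter
            (fun σ => σ ⟨j - 1, by omega⟩ = ⟨0, by omega⟩),
            (Polynomial.X : Polynomial ℤ) ^ aid n σ) =
          qbinom (Polynomial.X : Polynomial ℤ) (n - 1) (j - 1) * Polynomial.X ^ j *
            Faid (j - 1) * Faid (n - j))
    ∧ (∑ σ ∈ (Finset.univ : Finset (Equiv.Perm (Fin n))).filter
          (fun σ => σ ⟨0, by omega⟩ = ⟨0, by omega⟩),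
          (Polynomial.X : Polynomial ℤ) ^ aid n σ) = Faid (n - 1)
    ∧ (∑ σ ∈ (Finset.univ : Finset (Equiv.Perm (Fin n))).filter
          (fun σ => σ ⟨n - 1, by omega⟩ = ⟨0, by omega⟩),
          (Polynomial.X : Polynomial ℤ) ^ aid n σ) = Polynomial.X * Faid (n - 1) := by
  have hmid : ∀ j (h2 : 2 ≤ j) (h3 : j ≤ n - 1),
        (∑ σ ∈ (Finset.univ : Finset (Equiv.Perm (Fin n))).filter
            (fun σ => σ ⟨j - 1, by omega⟩ = ⟨0, by omega⟩),
            (Polynomial.X : Polynomial ℤ) ^ aid n σ) =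
          qbinom (Polynomial.X : Polynomial ℤ) (n - 1) (j - 1) * Polynomial.X ^ j *
            Faid (j - 1) * Faid (n - j) := by
    intro j h2 h3
    rw [sum_filter_aid n (j - 1) (n - j) (by omega) _ _ rfl rfl, if_neg (by omega),
      if_neg (by omega), show j - 1 + (n - j) = n - 1 by omega, show 1 + (j - 1) = j by omega]
  have hfirst : (∑ σ ∈ (Finset.univ : Finset (Equiv.Perm (Fin n))).filter
          (fun σ => σ ⟨0, by omega⟩ = ⟨0, by omega⟩),
          (Polynomial.X : Polynomial ℤ) ^ aid n σ) = Faid (n - 1) := by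
    rw [sum_filter_aid n 0 (n - 1) (by omega) _ _ rfl rfl, Faid_zero, qbinom_zero_right]
    simp
  have hlast : (∑ σ ∈ (Finset.univ : Finset (Equiv.Perm (Fin n))).filter
          (fun σ => σ ⟨n - 1, by omega⟩ = ⟨0, by omega⟩),
          (Polynomial.X : Polynomial ℤ) ^ aid n σ) = Polynomial.X * Faid (n - 1) := by
    rw [sum_filter_aid n (n - 1) 0 (by omega) _ _ rfl rfl, Faid_zero, add_zero, qbinom_self,
      if_neg (by omega)]
    simp
  refine ⟨?_, hmid, hfirst, hlast⟩
  obtain ⟨m, rfl⟩ : ∃ m, n = m + 2 := ⟨n - 2, by omega⟩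
  -- classify the permutations by the position of the least letter
  have hfib : Faid (m + 2) = ∑ p : Fin (m + 2),
      ∑ σ ∈ (Finset.univ : Finset (Equiv.Perm (Fin (m + 2)))).filter (fun σ => σ p = 0),
        (Polynomial.X : Polynomial ℤ) ^ aid (m + 2) σ := by
    rw [Faid, ← Finset.sum_fiberwise Finset.univ
      (fun σ : Equiv.Perm (Fin (m + 2)) => σ.symm 0)]
    refine Finset.sum_congr rfl fun p _ => Finset.sum_congr ?_ fun _ _ => rfl
    ext σ
    simp only [Finset.mem_filter, Finset.mem_univ, true_and]
    rw [Equiv.symm_apply_eq, eq_comm]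
  have hIcc : Finset.Icc 2 (m + 2 - 1) = (Finset.range m).map (addRightEmbedding 2) := by
    ext j
    simp only [Finset.mem_Icc, Finset.mem_map, Finset.mem_range, addRightEmbedding_apply]
    exact ⟨fun h => ⟨j - 2, by omega, by omega⟩, by rintro ⟨i, h, rfl⟩; omega⟩
  rw [hfib, Fin.sum_univ_succ, Fin.sum_univ_castSucc, hIcc, Finset.sum_map, Finset.sum_range,
    add_mul, one_mul, ← hlast]
  have hmid' : ∀ i : Fin m, _ := fun i => hmid (i + 2) (by omega) (by omega)
  simp only [addRightEmbedding_apply]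
  rw [← Finset.sum_congr rfl fun i _ => hmid' i, ← hfirst]
  have hcomm : ∀ A M L : Polynomial ℤ, A + (M + L) = A + L + M := fun A M L => by ring
  exact hcomm _ _ _
end
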